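/- Suppose char(K) = 0 and S = K[x_1,...,x_n]. Let I ⊆ S and J ⊆ S be homogeneous ideals such that Gin_lex(J) is a lex ideal. Then for a general change of coordinates g ∈ GL_n(K) and for i = 0 and i = 1, one has dim_K Tor_i^S(S/I, S/g(J))_d ≤ dim_K Tor_i^S(S/I^lex, S/J^oplex)_d for all d ≥ 0. -/

import Mathlib

open MvPolynomial TensorProduct CategoryTheory

noncomputable section

/-- The polynomial ring `S = K[x_1,...,x_n]`, standard graded. -/
abbrev PS (K : Type) [Field K] (n : ℕ) : Type := MvPolynomial (Fin n) K

variable (K : Type) [Field K] (n : ℕ)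

/-- An ideal of `S` is homogeneous if it contains all homogeneous components of its
elements. -/
def IsHomog (I : Ideal (PS K n)) : Prop :=
  ∀ f ∈ I, ∀ d : ℕ, MvPolynomial.homogeneousComponent d f ∈ I

/-- The change of coordinates of `S` induced by `g ∈ GL_n(K)`, determined by
`g(x_i) = ∑_j g_{ji} x_j`. -/
def coordChange (g : GL (Fin n) K) : PS K n →ₐ[K] PS K n :=
  MvPolynomial.aeval (fun i => ∑ j, ((g : Matrix (Fin n) (Fin n) K) j i) • MvPolynomial.X j)

/-- A property `P` holds for a general change of coordinates `g ∈ GL_n(K)` if there is a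
nonempty Zariski open subset `U ⊆ GL_n(K)` on which it holds; equivalently (as `GL_n(K)` is
an irreducible variety over the infinite field `K`) there is a nonzero polynomial `F` in the
matrix entries such that `P g` holds whenever `F` does not vanish at `g`. -/
def generally (P : GL (Fin n) K → Prop) : Prop :=
  ∃ F : MvPolynomial (Fin n × Fin n) K, F ≠ 0 ∧
    ∀ g : GL (Fin n) K,
      MvPolynomial.eval (fun p => (g : Matrix (Fin n) (Fin n) K) p.1 p.2) F ≠ 0 → P g

/-- The Hilbert function: `H(I,d) = dim_K I_d`. -/
def hilb (I : Ideal (PS K n)) (d : ℕ) : ℕ :=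
  Module.finrank K ↥(Submodule.restrictScalars K I ⊓ homogeneousSubmodule (Fin n) K d)

/-- The standard grading of `S = K[x_1,...,x_n]`, extended to `ℤ` (zero in negative
degrees). -/
def polyGrade (d : ℤ) : Submodule K (PS K n) :=
  if 0 ≤ d then homogeneousSubmodule (Fin n) K d.toNat else ⊥

/-- The degree `d` component of the (internal) tensor-product grading on `A ⊗[K] B`. -/
def tensorGrade {A B : Type} [AddCommGroup A] [Module K A] [AddCommGroup B] [Module K B]
    (GA : ℤ → Submodule K A) (GB : ℤ → Submodule K B) (d : ℤ) :
    Submodule K (A ⊗[K] B) :=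
  ⨆ p : ℤ, LinearMap.range (TensorProduct.map (GA p).subtype (GB (d - p)).subtype)

variable (N : Type) [AddCommGroup N] [Module K N] [Module (PS K n) N]
  [IsScalarTower K (PS K n) N]

/-- The tower of `K`-vector spaces `D_i = S^{⊗ i} ⊗_K N` appearing in the bar complex
`M ⊗_K S^{⊗ i} ⊗_K N`, which computes `Tor^S_i(M, N)`. -/
def barD : ℕ → ModuleCat K
  | 0 => ModuleCat.of K N
  | (i + 1) => ModuleCat.of K (PS K n ⊗[K] (barD i))

/-- The internal `ℤ`-grading on `D_i = S^{⊗ i} ⊗_K N` induced by the standard grading of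
`S` and a grading `GN` of `N`. -/
def barDGrade (GN : ℤ → Submodule K N) : (i : ℕ) → ℤ → Submodule K (barD K n N i)
  | 0 => GN
  | (i + 1) => tensorGrade K (polyGrade K n) (barDGrade GN i)

/-- Scalar multiplication `S → N → N` as a `K`-bilinear map. -/
def smulBilin : PS K n →ₗ[K] N →ₗ[K] N :=
  LinearMap.mk₂ K (fun s x => s • x)
    (fun s₁ s₂ x => add_smul s₁ s₂ x)
    (fun c s x => smul_assoc c s x)
    (fun s x y => smul_add s x y)
    (fun c s x => (smul_comm c s x).symm)

/-- The "contraction" part of the bar differential, `c_i : D_{i+1} → D_i`, defined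
recursively by `c_0(s ⊗ x) = s • x` and
`c_{i+1}(s ⊗ s' ⊗ t) = (s s') ⊗ t - s ⊗ c_i(s' ⊗ t)`. -/
def barC : (i : ℕ) → ((barD K n N (i + 1)) →ₗ[K] (barD K n N i))
  | 0 => TensorProduct.lift (smulBilin K n N)
  | (i + 1) =>
      (TensorProduct.map (LinearMap.mul' K (PS K n)) LinearMap.id).comp
        (TensorProduct.assoc K (PS K n) (PS K n) (barD K n N i)).symm.toLinearMap
      - TensorProduct.map LinearMap.id (barC i)

variable (M : Type) [AddCommGroup M] [Module K M] [Module (PS K n) M]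
  [IsScalarTower K (PS K n) M]

/-- Right scalar multiplication `M ⊗[K] S → M` as a `K`-linear map. -/
def smulMapM : M ⊗[K] PS K n →ₗ[K] M :=
  TensorProduct.lift (LinearMap.mk₂ K (fun m s => s • m)
    (fun m₁ m₂ s => smul_add s m₁ m₂)
    (fun c m s => smul_comm s c m)
    (fun m s₁ s₂ => add_smul s₁ s₂ m)
    (fun c m s => smul_assoc c s m))

/-- The bar differential `b_i : M ⊗ D_{i+1} → M ⊗ D_i`,
`b(m ⊗ s ⊗ t) = (s • m) ⊗ t - m ⊗ c_i(s ⊗ t)`.  The complex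
`⋯ → M ⊗_K S^{⊗ i} ⊗_K N → ⋯ → M ⊗_K S ⊗_K N → M ⊗_K N → 0`
is the bar complex `M ⊗_S Bar(S, N)`, whose `i`-th homology is `Tor^S_i(M, N)`;
it is a complex of graded vector spaces with degree-preserving differentials. -/
def barB (i : ℕ) : (M ⊗[K] (barD K n N (i + 1))) →ₗ[K] (M ⊗[K] (barD K n N i)) :=
  (TensorProduct.map (smulMapM K n M) LinearMap.id).comp
      (TensorProduct.assoc K M (PS K n) (barD K n N i)).symm.toLinearMap
  - TensorProduct.map LinearMap.id (barC K n N i)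

/-- `dim_K Tor_i^S(M, N)_j`, the dimension of the degree-`j` component of the graded module
`Tor_i^S(M, N)` for graded modules `M`, `N`: it is computed as the homology of the degree-`j`
strand of the bar complex, namely `dim (ker b_i)_j - dim (im b_{i+1})_j`
(for `i = 0`, `dim (M ⊗_K N)_j - dim (im b_1)_j`). -/
def torStrandDim (GM : ℤ → Submodule K M) (GN : ℤ → Submodule K N) : ℕ → ℤ → ℕ
  | 0, j =>
      Module.finrank K ↥(tensorGrade K GM (barDGrade K n N GN 0) j) -
        Module.finrank K
          ↥(LinearMap.range (barB K n N M 0) ⊓ tensorGrade K GM (barDGrade K n N GN 0) j)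
  | (i + 1), j =>
      Module.finrank K
          ↥(LinearMap.ker (barB K n N M i) ⊓
              tensorGrade K GM (barDGrade K n N GN (i + 1)) j) -
        Module.finrank K
          ↥(LinearMap.range (barB K n N M (i + 1)) ⊓
              tensorGrade K GM (barDGrade K n N GN (i + 1)) j)

/-- The quotient grading on `S/J`. -/
def quotGrade (J : Ideal (PS K n)) : ℤ → Submodule K (PS K n ⧸ J) := fun d =>
  (polyGrade K n d).map (Ideal.Quotient.mkₐ K J).toLinearMap

/-- The grading on an ideal `I ⊆ S` viewed as an `S`-module. -/
def idealGrade (I : Ideal (PS K n)) : ℤ → Submodule K ↥I := fun d =>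
  (polyGrade K n d).comap ((Submodule.subtype I).restrictScalars K)

/-- `dim_K Tor_i^S(S/I, S/J)_j`. -/
def torQQ (I J : Ideal (PS K n)) (i : ℕ) (j : ℤ) : ℕ :=
  torStrandDim K n (PS K n ⧸ J) (PS K n ⧸ I) (quotGrade K n I) (quotGrade K n J) i j

/-- `dim_K Tor_i^S(I, S/J)_j`. -/
def torIQ (I J : Ideal (PS K n)) (i : ℕ) (j : ℤ) : ℕ :=
  torStrandDim K n (PS K n ⧸ J) ↥I (idealGrade K n I) (quotGrade K n J) i j

/-- `a <_lex b` for the lexicographic order induced by `x_1 > x_2 > ⋯ > x_n`. -/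
def lexLt (a b : Fin n →₀ ℕ) : Prop := Finsupp.Lex (· < ·) (· < ·) a b

/-- `a <_oplex b` for the (opposite) lexicographic order induced by `x_n > ⋯ > x_1`. -/
def oplexLt (a b : Fin n →₀ ℕ) : Prop := Finsupp.Lex (· > ·) (· < ·) a b

/-- The total degree of an exponent vector. -/
def expDeg (m : Fin n →₀ ℕ) : ℕ := ∑ i, m i

/-- A monomial ideal: together with any polynomial it contains each of its monomials. -/
def IsMonomialIdeal (I : Ideal (PS K n)) : Prop :=
  ∀ f ∈ I, ∀ m ∈ f.support, MvPolynomial.monomial m (1 : K) ∈ I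

/-- A lex ideal: a monomial ideal whose monomials form a lex set. -/
def IsLexIdeal (I : Ideal (PS K n)) : Prop :=
  IsMonomialIdeal K n I ∧ ∀ u v : Fin n →₀ ℕ, expDeg n u = expDeg n v →
    MvPolynomial.monomial u (1 : K) ∈ I → lexLt n u v →
      MvPolynomial.monomial v (1 : K) ∈ I

/-- An opposite lex ideal: a monomial ideal whose monomials form an opposite lex set. -/
def IsOplexIdeal (I : Ideal (PS K n)) : Prop :=
  IsMonomialIdeal K n I ∧ ∀ u v : Fin n →₀ ℕ, expDeg n u = expDeg n v →
    MvPolynomial.monomial u (1 : K) ∈ I → oplexLt n u v →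
      MvPolynomial.monomial v (1 : K) ∈ I

/-- The initial ideal `in_r(I)` of `I` with respect to a (strict) monomial order `r`:
the ideal generated by the `r`-maximal monomials of the nonzero elements of `I`. -/
def initialIdealO (r : (Fin n →₀ ℕ) → (Fin n →₀ ℕ) → Prop) (I : Ideal (PS K n)) :
    Ideal (PS K n) :=
  Ideal.span {g | ∃ f ∈ I, ∃ m ∈ f.support,
    (∀ m' ∈ f.support, m' = m ∨ r m' m) ∧ g = MvPolynomial.monomial m (1 : K)}

/-!
Since `Tor₀(S/I, S/J) = S/(I + J)` and `Tor₁(S/I, S/J) = (I ∩ J)/(I · J)`, fixing the Hilbert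
functions of `I` and `J` leaves only those of `I + J` and `I · J` to be bounded from below.
For `J` replaced by `g(J)` these are largest, degree by degree, at a general `g`, so in each degree
one good `g` is enough. It comes from a degeneration: after changes of coordinates, act on `I` and
on `J` by one-parameter tori with opposite weights, so that the two limits contain the monomials of
`Gin_lex(I)` and of `J^oplex`; dimensions do not grow under specialization, so the sum and the
product of the limits are no larger than those of nearby `I` and `g(J)`.
The first monomial set is strongly stable in characteristic zero, and among strongly stable sets of
a given size the lex segment has the smallest union with, and sum with, an opposite lex set.
-/

/-! ### Homogeneous ideals and Hilbert functions -/

section HilbertFunction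

variable {K n}

attribute [local instance] MvPolynomial.gradedAlgebra

lemma isHomog_iff_isHomogeneous {A : Ideal (PS K n)} :
    IsHomog K n A ↔ A.IsHomogeneous (homogeneousSubmodule (Fin n) K) := by
  have hcomp (f : PS K n) (d : ℕ) : (DirectSum.decompose (homogeneousSubmodule (Fin n) K) f d :
      PS K n) = homogeneousComponent d f := decomposition.decompose'_apply f d
  exact ⟨fun h d f hf => hcomp f d ▸ h f hf d, fun h f hf d => hcomp f d ▸ h d hf⟩

namespace IsHomog

variable {A B : Ideal (PS K n)}

lemma sup (hA : IsHomog K n A) (hB : IsHomog K n B) : IsHomog K n (A ⊔ B) :=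
  isHomog_iff_isHomogeneous.2
    ((isHomog_iff_isHomogeneous.1 hA).sup (isHomog_iff_isHomogeneous.1 hB))

lemma mul (hA : IsHomog K n A) (hB : IsHomog K n B) : IsHomog K n (A * B) :=
  isHomog_iff_isHomogeneous.2
    ((isHomog_iff_isHomogeneous.1 hA).mul (isHomog_iff_isHomogeneous.1 hB))

lemma map (hA : IsHomog K n A) {φ : PS K n →ₐ[K] PS K n}
    (hφ : ∀ p d, p.IsHomogeneous d → (φ p).IsHomogeneous d) : IsHomog K n (A.map φ) := by
  obtain ⟨S, rfl⟩ := (Ideal.IsHomogeneous.iff_exists _ _).1 (isHomog_iff_isHomogeneous.1 hA)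
  rw [isHomog_iff_isHomogeneous, Ideal.map_span]
  refine Ideal.homogeneous_span _ _ ?_
  rintro _ ⟨_, ⟨⟨p, d, hp⟩, -, rfl⟩, rfl⟩
  exact ⟨d, hφ p d hp⟩

end IsHomog

instance finite_homogeneousSubmodule (d : ℕ) :
    Module.Finite K (homogeneousSubmodule (Fin n) K d) :=
  Module.Finite.iff_fg.2 (homogeneousSubmodule_fg _ _ d)

lemma finite_homogeneousPart (I : Ideal (PS K n)) (d : ℕ) :
    Module.Finite K ↥(I.restrictScalars K ⊓ homogeneousSubmodule (Fin n) K d) :=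
  Submodule.finiteDimensional_of_le (S₂ := homogeneousSubmodule (Fin n) K d) inf_le_right

lemma hilb_mono {A B : Ideal (PS K n)} (h : A ≤ B) (d : ℕ) : hilb K n A d ≤ hilb K n B d := by
  have := finite_homogeneousPart B d
  exact Submodule.finrank_mono (inf_le_inf_right _ fun _ hx => h hx)

lemma homogeneousPart_sup {A B : Ideal (PS K n)} (hA : IsHomog K n A) (hB : IsHomog K n B)
    (d : ℕ) :
    (A ⊔ B).restrictScalars K ⊓ homogeneousSubmodule (Fin n) K d =
      (A.restrictScalars K ⊓ homogeneousSubmodule (Fin n) K d) ⊔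
        (B.restrictScalars K ⊓ homogeneousSubmodule (Fin n) K d) := by
  apply le_antisymm
  · rintro f ⟨hf, hfd⟩
    obtain ⟨a, ha, b, hb, rfl⟩ := Submodule.mem_sup.1 (show f ∈ A ⊔ B from hf)
    refine Submodule.mem_sup.2 ⟨homogeneousComponent d a,
      ⟨hA a ha d, homogeneousComponent_isHomogeneous d a⟩, homogeneousComponent d b,
      ⟨hB b hb d, homogeneousComponent_isHomogeneous d b⟩, ?_⟩
    rw [← map_add, homogeneousComponent_of_mem hfd, if_pos rfl]
  · exact sup_le (fun f hf => ⟨Ideal.mem_sup_left hf.1, hf.2⟩)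
      fun f hf => ⟨Ideal.mem_sup_right hf.1, hf.2⟩

lemma hilb_sup_add_hilb_inf {A B : Ideal (PS K n)} (hA : IsHomog K n A) (hB : IsHomog K n B)
    (d : ℕ) :
    hilb K n (A ⊔ B) d + hilb K n (A ⊓ B) d = hilb K n A d + hilb K n B d := by
  have := finite_homogeneousPart A d
  have := finite_homogeneousPart B d
  unfold hilb
  rw [homogeneousPart_sup hA hB,
    show (A ⊓ B).restrictScalars K = A.restrictScalars K ⊓ B.restrictScalars K from rfl,
    inf_inf_distrib_right]
  exact Submodule.finrank_sup_add_finrank_inf_eq _ _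

end HilbertFunction

/-! ### Lex segments among strongly stable sets of exponents -/

section Counting

open Finset

/-- `L` is a lex segment in degree `d`: a set of exponents of degree `d` which, with each element,
contains all lexicographically larger exponents of degree `d`. -/
structure IsLexSegment {n : ℕ} (L : Finset (Fin n → ℕ)) (d : ℕ) : Prop where
  sum_eq : ∀ u ∈ L, ∑ i, u i = d
  mem_of_lt : ∀ u ∈ L, ∀ v, ∑ i, v i = d → toLex u < toLex v → v ∈ L

/-- `B` is a strongly stable set of exponents of degree `d`: it is closed under replacing a variable
by one of smaller index. -/
structure IsStronglyStable {n : ℕ} (B : Finset (Fin n → ℕ)) (d : ℕ) : Prop where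
  sum_eq : ∀ u ∈ B, ∑ i, u i = d
  mem_of_lt : ∀ (v : Fin n → ℕ) (i j : Fin n),
    i < j → v + Pi.single j 1 ∈ B → v + Pi.single i 1 ∈ B

/-- `T` is a lower set for the opposite lexicographic order among the exponents of degree `d`. -/
structure IsOplexLowerSet {n : ℕ} (T : Finset (Fin n → ℕ)) (d : ℕ) : Prop where
  sum_eq : ∀ u ∈ T, ∑ i, u i = d
  mem_of_lt : ∀ u ∈ T, ∀ v, ∑ i, v i = d → toColex v < toColex u → v ∈ T

/-- In `n` variables, lex segments minimize the number of elements in opposite lex lower sets among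
the strongly stable sets that are at least as large. -/
def LexSegmentsMinimizeInter (n : ℕ) : Prop :=
  ∀ (d : ℕ) (B L T : Finset (Fin n → ℕ)), IsStronglyStable B d → IsLexSegment L d →
    IsOplexLowerSet T d → #L ≤ #B → #(L ∩ T) ≤ #(B ∩ T)

lemma sum_add_single {n : ℕ} (v : Fin n → ℕ) (i : Fin n) :
    ∑ j, (v + Pi.single i 1 : Fin n → ℕ) j = ∑ j, v j + 1 := by
  simp [sum_add_distrib]

lemma IsLexSegment.subset_of_card_le {n d : ℕ} {L L' : Finset (Fin n → ℕ)}
    (hL : IsLexSegment L d) (hL' : IsLexSegment L' d) (hcard : #L ≤ #L') : L ⊆ L' := by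
  intro x hx
  by_contra hx'
  have hsub : L' ⊆ L := fun y hy => by
    rcases lt_trichotomy (toLex x) (toLex y) with h | h | h
    · exact hL.mem_of_lt x hx y (hL'.sum_eq y hy) h
    · exact toLex.injective h ▸ hx
    · exact absurd (hL'.mem_of_lt y hy x (hL.sum_eq x hx) h) hx'
  exact hx' (eq_of_subset_of_card_le hsub hcard ▸ hx)

lemma IsLexSegment.insert {n d : ℕ} {L : Finset (Fin n → ℕ)} (hL : IsLexSegment L d)
    {x : Fin n → ℕ} (hx : ∑ i, x i = d)
    (hmax : ∀ v, ∑ i, v i = d → toLex x < toLex v → v ∈ L) : IsLexSegment (insert x L) d := by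
  refine ⟨fun u hu => ?_, fun u hu v hv huv => mem_insert_of_mem ?_⟩
  · rcases mem_insert.1 hu with rfl | hu
    exacts [hx, hL.sum_eq u hu]
  · rcases mem_insert.1 hu with rfl | hu
    exacts [hmax v hv huv, hL.mem_of_lt u hu v hv huv]

lemma exists_isLexSegment_card_eq {n d k : ℕ} (hk : k ≤ #(Nat.antidiagonalTuple n d)) :
    ∃ L : Finset (Fin n → ℕ), IsLexSegment L d ∧ #L = k := by
  induction k with
  | zero => exact ⟨∅, ⟨by simp, by simp⟩, rfl⟩
  | succ k ih =>
    obtain ⟨L, hL, hcard⟩ := ih (by omega)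
    have hne : (Nat.antidiagonalTuple n d \ L).Nonempty :=
      sdiff_nonempty.2 fun h => absurd (card_le_card h) (by omega)
    obtain ⟨x, hx, hmax⟩ := exists_max_image _ (fun u => toLex u) hne
    rw [mem_sdiff, Nat.mem_antidiagonalTuple] at hx
    refine ⟨insert x L, hL.insert hx.1 fun v hv hxv => ?_, by
      rw [card_insert_of_notMem hx.2, hcard]⟩
    by_contra hvL
    exact (hmax v (mem_sdiff.2 ⟨Nat.mem_antidiagonalTuple.2 hv, hvL⟩)).not_gt hxv

/-! ### A Macaulay-type estimate -/

/-- The exponents of degree `d` in the variables of index at most `j`. -/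
def exponentsUpTo (n d : ℕ) (j : Fin n) : Finset (Fin n → ℕ) :=
  (Nat.antidiagonalTuple n d).filter fun u => ∀ i > j, u i = 0

lemma mem_exponentsUpTo {n d : ℕ} {j : Fin n} {u : Fin n → ℕ} :
    u ∈ exponentsUpTo n d j ↔ ∑ i, u i = d ∧ ∀ i > j, u i = 0 := by
  rw [exponentsUpTo, mem_filter, Nat.mem_antidiagonalTuple]

lemma isOplexLowerSet_exponentsUpTo (n d : ℕ) (j : Fin n) :
    IsOplexLowerSet (exponentsUpTo n d j) d := by
  refine ⟨fun u hu => (mem_exponentsUpTo.1 hu).1, fun u hu v hv hvu => ?_⟩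
  have hu0 := (mem_exponentsUpTo.1 hu).2
  obtain ⟨i, heq, hlt⟩ : ∃ i, (∀ k > i, v k = u k) ∧ v i < u i := hvu
  have hij : i ≤ j := not_lt.1 fun h => by simp [hu0 i h] at hlt
  exact mem_exponentsUpTo.2 ⟨hv, fun k hk => by rw [heq k (hij.trans_lt hk), hu0 k hk]⟩

lemma sub_single_add_single {n : ℕ} {w : Fin n → ℕ} {j : Fin n} (h : 0 < w j) :
    w - Pi.single j 1 + Pi.single j 1 = w := by
  refine tsub_add_cancel_of_le fun i => ?_
  rcases eq_or_ne i j with rfl | hi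
  · simpa using Nat.succ_le_of_lt h
  · simp [hi]

lemma exists_mem_exponentsUpTo_add_single_eq {n a : ℕ} {w : Fin n → ℕ}
    (hw : ∑ i, w i = a + 1) : ∃ j, ∃ v ∈ exponentsUpTo n a j, v + Pi.single j 1 = w := by
  have hne : (univ.filter fun i => 0 < w i).Nonempty := by
    obtain ⟨i, -, hi⟩ := exists_ne_zero_of_sum_ne_zero (hw.trans_ne a.succ_ne_zero)
    exact ⟨i, by simpa [Nat.pos_iff_ne_zero] using hi⟩
  obtain ⟨j, hj, hmax⟩ := exists_max_image _ id hne
  have hadd := sub_single_add_single (mem_filter.1 hj).2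
  refine ⟨j, w - Pi.single j 1, mem_exponentsUpTo.2 ⟨?_, fun i hi => ?_⟩, hadd⟩
  · rw [← hadd, sum_add_single] at hw
    omega
  · have hwi : w i = 0 := by
      by_contra h
      exact (hmax i (by simpa using Nat.pos_of_ne_zero h)).not_gt hi
    simp [hwi]

lemma toLex_le_of_add_single_le {n a : ℕ} {j l : Fin n} (hjl : j ≤ l) {v w : Fin n → ℕ}
    (hv : ∑ i, v i = a) (hw : w ∈ exponentsUpTo n a j)
    (h : toLex (v + Pi.single l 1) ≤ toLex (w + Pi.single j 1)) : toLex v ≤ toLex w := by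
  obtain ⟨hwa, hw0⟩ := mem_exponentsUpTo.1 hw
  refine not_lt.1 fun hlt => ?_
  obtain ⟨i, heq, hi⟩ : ∃ i, (∀ k < i, w k = v k) ∧ w i < v i := hlt
  rcases le_or_gt j i with hji | hij
  · have hle : ∀ k, w k ≤ v k := fun k => by
      rcases lt_trichotomy k i with hk | rfl | hk
      exacts [(heq k hk).le, hi.le, (hw0 k (hji.trans_lt hk)).trans_le (Nat.zero_le _)]
    have := sum_lt_sum (fun k _ => hle k) ⟨i, mem_univ i, hi⟩
    omega
  · refine h.not_gt ⟨i, fun k hk => ?_, ?_⟩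
    · simp [heq k hk, (hk.trans hij).ne, ((hk.trans hij).trans_le hjl).ne]
    · simpa [hij.ne, (hij.trans_le hjl).ne] using hi

lemma card_le_sum_card_inter_exponentsUpTo {m a : ℕ} {Λ W : Finset (Fin (m + 1) → ℕ)}
    (hΛ : IsLexSegment Λ a) {v : Fin (m + 1) → ℕ} (hv : v ∈ Λ) (hW : ∀ w ∈ W, ∑ i, w i = a + 1)
    (hle : ∀ w ∈ W, toLex (v + Pi.single (Fin.last m) 1) ≤ toLex w) :
    #W ≤ ∑ j, #(Λ ∩ exponentsUpTo (m + 1) a j) := by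
  have hsub : W ⊆ univ.biUnion fun j =>
      (Λ ∩ exponentsUpTo (m + 1) a j).image (· + Pi.single j 1) := fun w hw => by
    obtain ⟨j, w', hw', rfl⟩ := exists_mem_exponentsUpTo_add_single_eq (hW w hw)
    refine mem_biUnion.2 ⟨j, mem_univ j, mem_image_of_mem _ (mem_inter.2 ⟨?_, hw'⟩)⟩
    rcases (toLex_le_of_add_single_le (Fin.le_last j) (hΛ.sum_eq v hv) hw'
      (hle _ hw)).eq_or_lt with h | h
    exacts [toLex.injective h ▸ hv, hΛ.mem_of_lt v hv w' (mem_exponentsUpTo.1 hw').1 h]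
  calc #W ≤ _ := card_le_card hsub
    _ ≤ _ := card_biUnion_le
    _ ≤ _ := sum_le_sum fun j _ => card_image_le

lemma sum_card_inter_exponentsUpTo_le {n a : ℕ} {B₁ B₀ : Finset (Fin n → ℕ)}
    (hmul : ∀ v ∈ B₁, ∀ j, v + Pi.single j 1 ∈ B₀) :
    ∑ j, #(B₁ ∩ exponentsUpTo n a j) ≤ #B₀ := by
  let A (j : Fin n) : Finset (Fin n → ℕ) :=
    (B₁ ∩ exponentsUpTo n a j).image (· + Pi.single j 1)
  have hne : ∀ j j', j < j' → Disjoint (A j) (A j') := fun j j' hjj => by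
    refine disjoint_left.2 fun x hx hx' => ?_
    obtain ⟨y, hy, rfl⟩ := mem_image.1 hx
    obtain ⟨y', -, h⟩ := mem_image.1 hx'
    have hy0 := (mem_exponentsUpTo.1 (mem_inter.1 hy).2).2 j' hjj
    simpa [hy0, hjj.ne'] using congrFun h j'
  calc ∑ j, #(B₁ ∩ exponentsUpTo n a j) = ∑ j, #(A j) :=
        sum_congr rfl fun j _ => (card_image_of_injective _ (add_left_injective _)).symm
    _ = #(univ.biUnion A) := (card_biUnion fun j _ j' _ h =>
        h.lt_or_gt.elim (hne j j') fun h => (hne j' j h).symm).symm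
    _ ≤ #B₀ := card_le_card fun x hx => by
        obtain ⟨j, -, hx⟩ := mem_biUnion.1 hx
        obtain ⟨y, hy, rfl⟩ := mem_image.1 hx
        exact hmul y (mem_inter.1 hy).1 j

lemma add_single_last_mem_of_card_eq {m a : ℕ} (hmin : LexSegmentsMinimizeInter (m + 1))
    {B₁ B₀ Λ₁ Λ₀ : Finset (Fin (m + 1) → ℕ)} (hB₁ : IsStronglyStable B₁ a)
    (hmul : ∀ v ∈ B₁, ∀ j, v + Pi.single j 1 ∈ B₀) (hΛ₁ : IsLexSegment Λ₁ a)
    (hΛ₀ : IsLexSegment Λ₀ (a + 1)) (h₁ : #Λ₁ = #B₁) (h₀ : #Λ₀ = #B₀)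
    {v : Fin (m + 1) → ℕ} (hv : v ∈ Λ₁) : v + Pi.single (Fin.last m) 1 ∈ Λ₀ := by
  set z := v + Pi.single (Fin.last m) 1
  by_contra hz
  have hzd : ∑ i, z i = a + 1 := by rw [sum_add_single, hΛ₁.sum_eq v hv]
  have hW : ∀ w ∈ insert z Λ₀, ∑ i, w i = a + 1 := fun w hw => by
    rcases mem_insert.1 hw with rfl | hw
    exacts [hzd, hΛ₀.sum_eq w hw]
  have hle : ∀ w ∈ insert z Λ₀, toLex z ≤ toLex w := fun w hw => by
    rcases mem_insert.1 hw with rfl | hw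
    exacts [le_rfl, not_lt.1 fun h => hz (hΛ₀.mem_of_lt w hw z hzd h)]
  have := calc #(insert z Λ₀) ≤ ∑ j, #(Λ₁ ∩ exponentsUpTo (m + 1) a j) :=
        card_le_sum_card_inter_exponentsUpTo hΛ₁ hv hW hle
    _ ≤ ∑ j, #(B₁ ∩ exponentsUpTo (m + 1) a j) := sum_le_sum fun j _ =>
        hmin a B₁ Λ₁ _ hB₁ hΛ₁ (isOplexLowerSet_exponentsUpTo _ _ j) h₁.le
    _ ≤ #B₀ := sum_card_inter_exponentsUpTo_le hmul
  rw [card_insert_of_notMem hz] at this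
  omega

/-! ### Slices along the last variable -/

/-- `lastSlice B k` consists of the exponents `v` for which `(v, k)` lies in `B`. -/
def lastSlice {n : ℕ} (B : Finset (Fin (n + 1) → ℕ)) (k : ℕ) : Finset (Fin n → ℕ) :=
  (B.filter fun u => u (Fin.last n) = k).image Fin.init

section Slice

variable {n : ℕ}

/-- The exponent `(v, k)`, a nondependent `Fin.snoc`. -/
abbrev appendLast (v : Fin n → ℕ) (k : ℕ) : Fin (n + 1) → ℕ :=
  Fin.snoc (α := fun _ => ℕ) v k

lemma mem_lastSlice {B : Finset (Fin (n + 1) → ℕ)} {k : ℕ} {v : Fin n → ℕ} :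
    v ∈ lastSlice B k ↔ appendLast v k ∈ B := by
  refine mem_image.trans ⟨?_, fun h => ⟨_, mem_filter.2 ⟨h, Fin.snoc_last ..⟩, Fin.init_snoc ..⟩⟩
  rintro ⟨u, hu, rfl⟩
  obtain ⟨hu, rfl⟩ := mem_filter.1 hu
  rwa [appendLast, Fin.snoc_init_self]

lemma lastSlice_inter (B T : Finset (Fin (n + 1) → ℕ)) (k : ℕ) :
    lastSlice (B ∩ T) k = lastSlice B k ∩ lastSlice T k := by
  ext v
  simp only [mem_lastSlice, mem_inter]

lemma le_sum_of_apply (u : Fin n → ℕ) (i : Fin n) : u i ≤ ∑ j, u j :=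
  single_le_sum (f := u) (fun _ _ => Nat.zero_le _) (mem_univ i)

lemma card_eq_sum_card_lastSlice {B : Finset (Fin (n + 1) → ℕ)} {d : ℕ}
    (hB : ∀ u ∈ B, ∑ i, u i = d) : #B = ∑ k ∈ range (d + 1), #(lastSlice B k) := by
  rw [card_eq_sum_card_fiberwise (f := fun u => u (Fin.last n)) (t := range (d + 1))]
  · refine sum_congr rfl fun k _ => (card_image_of_injOn fun u hu v hv huv => ?_).symm
    rw [← Fin.snoc_init_self u, ← Fin.snoc_init_self v, huv, (mem_filter.1 hu).2,
      (mem_filter.1 hv).2]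
  · intro u hu
    have := hB u hu ▸ le_sum_of_apply u (Fin.last n)
    simpa using Nat.lt_succ_of_le this

lemma sum_appendLast (v : Fin n → ℕ) (k : ℕ) : ∑ i, appendLast v k i = ∑ i, v i + k := by
  simp [Fin.sum_univ_castSucc]

lemma appendLast_add_single_castSucc (v : Fin n → ℕ) (k : ℕ) (j : Fin n) :
    appendLast v k + Pi.single j.castSucc 1 = appendLast (v + Pi.single j 1) k := by
  funext i
  refine Fin.lastCases ?_ (fun i => ?_) i
  · simp [(Fin.castSucc_lt_last j).ne']
  · simp [Pi.single_apply]

lemma appendLast_add_single_last (v : Fin n → ℕ) (k : ℕ) :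
    appendLast v k + Pi.single (Fin.last n) 1 = appendLast v (k + 1) := by
  funext i
  refine Fin.lastCases ?_ (fun i => ?_) i
  · simp
  · simp [(Fin.castSucc_lt_last i).ne]

lemma toLex_appendLast_lt {v w : Fin n → ℕ} (k l : ℕ) (h : toLex v < toLex w) :
    toLex (appendLast v k) < toLex (appendLast w l) := by
  obtain ⟨i, heq, hlt⟩ : ∃ i, (∀ j < i, v j = w j) ∧ v i < w i := h
  refine ⟨i.castSucc, fun j hj => ?_, by simpa using hlt⟩
  obtain ⟨j, rfl⟩ := Fin.exists_castSucc_eq.2 (hj.trans (Fin.castSucc_lt_last i)).ne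
  simpa using heq j (by simpa using hj)

lemma toColex_appendLast_lt_of_lt (v w : Fin n → ℕ) {k l : ℕ} (h : k < l) :
    toColex (appendLast v k) < toColex (appendLast w l) :=
  ⟨Fin.last n, fun j hj => absurd hj (Fin.le_last j).not_gt, by simpa using h⟩

lemma toColex_appendLast_lt {v w : Fin n → ℕ} (k : ℕ) (h : toColex v < toColex w) :
    toColex (appendLast v k) < toColex (appendLast w k) := by
  obtain ⟨i, heq, hlt⟩ : ∃ i, (∀ j > i, v j = w j) ∧ v i < w i := h
  refine ⟨i.castSucc, fun j => Fin.lastCases (fun _ => by simp) (fun j hj => ?_) j,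
    by simpa using hlt⟩
  simpa using heq j (by simpa using hj)

lemma sum_eq_of_mem_lastSlice {d k : ℕ} {B : Finset (Fin (n + 1) → ℕ)}
    (hB : ∀ u ∈ B, ∑ i, u i = d) {v : Fin n → ℕ} (hv : v ∈ lastSlice B k) : ∑ i, v i = d - k := by
  have := hB _ (mem_lastSlice.1 hv)
  rw [sum_appendLast] at this
  omega

lemma IsStronglyStable.slice {d : ℕ} {B : Finset (Fin (n + 1) → ℕ)} (hB : IsStronglyStable B d)
    (k : ℕ) : IsStronglyStable (lastSlice B k) (d - k) := by
  refine ⟨fun v hv => sum_eq_of_mem_lastSlice hB.sum_eq hv, fun v i j hij hv => ?_⟩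
  rw [mem_lastSlice, ← appendLast_add_single_castSucc] at hv ⊢
  exact hB.mem_of_lt _ _ _ (by simpa using hij) hv

lemma IsLexSegment.slice {d k : ℕ} {L : Finset (Fin (n + 1) → ℕ)} (hL : IsLexSegment L d)
    (hk : k ≤ d) : IsLexSegment (lastSlice L k) (d - k) := by
  refine ⟨fun v hv => sum_eq_of_mem_lastSlice hL.sum_eq hv, fun u hu v hv huv => ?_⟩
  rw [mem_lastSlice] at hu ⊢
  exact hL.mem_of_lt _ hu _ (by rw [sum_appendLast]; omega) (toLex_appendLast_lt k k huv)

lemma IsOplexLowerSet.slice {d k : ℕ} {T : Finset (Fin (n + 1) → ℕ)} (hT : IsOplexLowerSet T d)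
    (hk : k ≤ d) : IsOplexLowerSet (lastSlice T k) (d - k) := by
  refine ⟨fun v hv => sum_eq_of_mem_lastSlice hT.sum_eq hv, fun u hu v hv huv => ?_⟩
  rw [mem_lastSlice] at hu ⊢
  exact hT.mem_of_lt _ hu _ (by rw [sum_appendLast]; omega) (toColex_appendLast_lt k huv)

lemma lastSlice_inter_of_lt {d : ℕ} {T : Finset (Fin (n + 1) → ℕ)} (hT : IsOplexLowerSet T d)
    {t : Fin (n + 1) → ℕ} (ht : t ∈ T) {X : Finset (Fin (n + 1) → ℕ)}
    (hX : ∀ u ∈ X, ∑ i, u i = d) {k : ℕ} (hk : k < t (Fin.last n)) :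
    lastSlice (X ∩ T) k = lastSlice X k := by
  ext v
  rw [mem_lastSlice, mem_lastSlice, mem_inter, and_iff_left_iff_imp]
  refine fun hv => hT.mem_of_lt t ht _ (hX _ hv) ?_
  rw [← Fin.snoc_init_self t]
  exact toColex_appendLast_lt_of_lt _ _ hk

/-- The opposite lex order compares last coordinates first, so the slices of a lower set are full
below its largest last coordinate `E` and empty above it. -/
lemma IsOplexLowerSet.exists_card_inter_eq {d : ℕ} {T : Finset (Fin (n + 1) → ℕ)}
    (hT : IsOplexLowerSet T d) (hne : T.Nonempty) :
    ∃ E ≤ d, ∀ X : Finset (Fin (n + 1) → ℕ), (∀ u ∈ X, ∑ i, u i = d) →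
      #(X ∩ T) = ∑ k ∈ range E, #(lastSlice X k) +
        #(lastSlice X E ∩ lastSlice T E) := by
  obtain ⟨t, ht, hmax⟩ := exists_max_image T (fun u => u (Fin.last n)) hne
  have hEd : t (Fin.last n) ≤ d := hT.sum_eq t ht ▸ le_sum_of_apply t _
  refine ⟨t (Fin.last n), hEd, fun X hX => ?_⟩
  have hempty : ∀ k ∈ Ico (t (Fin.last n) + 1) (d + 1), #(lastSlice (X ∩ T) k) = 0 := by
    intro k hk
    rw [card_eq_zero, eq_empty_iff_forall_notMem]
    intro v hv
    have := hmax _ (mem_inter.1 (mem_lastSlice.1 hv)).2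
    simp only [Fin.snoc_last] at this
    have := (mem_Ico.1 hk).1
    omega
  rw [card_eq_sum_card_lastSlice fun u hu => hX u (mem_inter.1 hu).1,
    ← sum_range_add_sum_Ico _ (show t (Fin.last n) + 1 ≤ d + 1 by omega), sum_range_succ,
    sum_eq_zero hempty, add_zero, lastSlice_inter X T (t (Fin.last n)),
    sum_congr rfl fun k hk => by rw [lastSlice_inter_of_lt hT ht hX (mem_range.1 hk)]]

end Slice

/-! ### Lex segments minimize intersections with opposite lex lower sets -/

/-- `Λ` is the slicewise compression of `B`: the lex segment `Λ k` has the size of the `k`-th slice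
of `B`. -/
structure IsSliceCompression {n : ℕ} (B : Finset (Fin (n + 1) → ℕ)) (d : ℕ)
    (Λ : ℕ → Finset (Fin n → ℕ)) : Prop where
  isLexSegment : ∀ k, IsLexSegment (Λ k) (d - k)
  card_eq : ∀ k, #(Λ k) = #(lastSlice B k)

lemma exists_isSliceCompression {n d : ℕ} {B : Finset (Fin (n + 1) → ℕ)}
    (hB : ∀ u ∈ B, ∑ i, u i = d) : ∃ Λ, IsSliceCompression B d Λ := by
  have hex (k : ℕ) : ∃ Λ : Finset (Fin n → ℕ), IsLexSegment Λ (d - k) ∧ #Λ = #(lastSlice B k) :=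
    exists_isLexSegment_card_eq <| card_le_card fun v hv =>
      Nat.mem_antidiagonalTuple.2 (sum_eq_of_mem_lastSlice hB hv)
  choose Λ hΛ hcard using hex
  exact ⟨Λ, hΛ, hcard⟩

lemma ne_last_of_first_difference {m : ℕ} {w v : Fin (m + 1) → ℕ}
    (hs : ∑ i, w i = ∑ i, v i) {i : Fin (m + 1)} (heq : ∀ j < i, w j = v j)
    (hi : w i < v i) : i ≠ Fin.last m := by
  rintro rfl
  exact (sum_lt_sum (fun j _ => (Fin.le_last j).eq_or_lt.elim (fun h => h ▸ hi.le)
    fun h => (heq j h).le) ⟨_, mem_univ _, hi⟩).ne hs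

namespace IsSliceCompression

variable {m d : ℕ} {B : Finset (Fin (m + 2) → ℕ)} {Λ : ℕ → Finset (Fin (m + 1) → ℕ)}

lemma add_single_last_mem (hΛ : IsSliceCompression B d Λ)
    (hmin : LexSegmentsMinimizeInter (m + 1)) (hB : IsStronglyStable B d) {k : ℕ}
    (hk : k + 1 ≤ d) {v : Fin (m + 1) → ℕ} (hv : v ∈ Λ (k + 1)) :
    v + Pi.single (Fin.last m) 1 ∈ Λ k := by
  have hΛk := hΛ.isLexSegment k
  rw [show d - k = d - (k + 1) + 1 by omega] at hΛk
  refine add_single_last_mem_of_card_eq hmin (hB.slice (k + 1)) (fun w hw j => ?_)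
    (hΛ.isLexSegment (k + 1)) hΛk (hΛ.card_eq _) (hΛ.card_eq _) hv
  rw [mem_lastSlice] at hw ⊢
  rw [← appendLast_add_single_last] at hw
  rw [← appendLast_add_single_castSucc]
  exact hB.mem_of_lt _ _ _ (Fin.castSucc_lt_last j) hw

lemma exists_mem_eq_off_last (hΛ : IsSliceCompression B d Λ)
    (hmin : LexSegmentsMinimizeInter (m + 1)) (hB : IsStronglyStable B d) {k s : ℕ}
    (hks : k ≤ s) (hs : s ≤ d) {v : Fin (m + 1) → ℕ} (hv : v ∈ Λ s) :
    ∃ v' ∈ Λ k, ∀ i ≠ Fin.last m, v' i = v i := by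
  induction s, hks using Nat.le_induction generalizing v with
  | base => exact ⟨v, hv, fun _ _ => rfl⟩
  | succ s _ ih =>
    obtain ⟨v', hv', heq⟩ := ih (by omega) (hΛ.add_single_last_mem hmin hB hs hv)
    exact ⟨v', hv', fun i hi => by rw [heq i hi]; simp [hi]⟩

lemma subset_lastSlice_of_not_subset (hΛ : IsSliceCompression B d Λ)
    (hmin : LexSegmentsMinimizeInter (m + 1)) (hB : IsStronglyStable B d)
    {L : Finset (Fin (m + 2) → ℕ)} (hL : IsLexSegment L d) {k s : ℕ} (hks : k ≤ s) (hs : s ≤ d)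
    (hk : ¬ lastSlice L k ⊆ Λ k) : Λ s ⊆ lastSlice L s := by
  obtain ⟨w, hwL, hwΛ⟩ := not_subset.1 hk
  intro v hv
  obtain ⟨v', hv', hoff⟩ := hΛ.exists_mem_eq_off_last hmin hB hks hs hv
  have hw := sum_eq_of_mem_lastSlice hL.sum_eq hwL
  have hv'd := (hΛ.isLexSegment k).sum_eq v' hv'
  have hlt : toLex w < toLex v' := by
    refine lt_of_not_ge fun h => hwΛ ?_
    rcases h.eq_or_lt with h | h
    exacts [toLex.injective h ▸ hv', (hΛ.isLexSegment k).mem_of_lt v' hv' w hw h]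
  obtain ⟨i, heq, hi⟩ : ∃ i, (∀ j < i, w j = v' j) ∧ w i < v' i := hlt
  have hne := ne_last_of_first_difference (hw.trans hv'd.symm) heq hi
  have hwv : toLex w < toLex v :=
    ⟨i, fun j hj => (heq j hj).trans (hoff j (hj.trans_le (Fin.le_last i)).ne),
      (hoff i hne).subst hi⟩
  rw [mem_lastSlice] at hwL ⊢
  refine hL.mem_of_lt _ hwL _ ?_ (toLex_appendLast_lt k s hwv)
  rw [sum_appendLast, (hΛ.isLexSegment s).sum_eq v hv]
  omega

lemma sum_card_lastSlice_le (hΛ : IsSliceCompression B d Λ)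
    (hmin : LexSegmentsMinimizeInter (m + 1)) (hB : IsStronglyStable B d)
    {L : Finset (Fin (m + 2) → ℕ)} (hL : IsLexSegment L d) (hcard : #L ≤ #B) {E : ℕ}
    (hE : E ≤ d + 1) :
    ∑ k ∈ range E, #(lastSlice L k) ≤ ∑ k ∈ range E, #(lastSlice B k) := by
  by_contra! hcon
  obtain ⟨k, hkE, hk⟩ := exists_lt_of_sum_lt hcon
  have hkE := mem_range.1 hkE
  have hnot : ¬ lastSlice L k ⊆ Λ k := fun h => by
    have := card_le_card h
    have := hΛ.card_eq k
    omega
  have htail : ∑ s ∈ Ico E (d + 1), #(lastSlice B s) ≤ ∑ s ∈ Ico E (d + 1), #(lastSlice L s) :=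
    sum_le_sum fun s hs => by
      have hs := mem_Ico.1 hs
      rw [← hΛ.card_eq]
      exact card_le_card
        (hΛ.subset_lastSlice_of_not_subset hmin hB hL (by omega) (by omega) hnot)
  rw [card_eq_sum_card_lastSlice hB.sum_eq, card_eq_sum_card_lastSlice hL.sum_eq,
    ← sum_range_add_sum_Ico _ hE, ← sum_range_add_sum_Ico _ hE] at hcard
  omega

end IsSliceCompression

lemma IsLexSegment.card_inter_le {n d : ℕ} {L Λ T : Finset (Fin n → ℕ)} (hL : IsLexSegment L d)
    (hΛ : IsLexSegment Λ d) : #(L ∩ T) ≤ #(Λ ∩ T) + (#L - #Λ) := by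
  rcases le_total #L #Λ with h | h
  · exact (card_le_card (inter_subset_inter_right (hL.subset_of_card_le hΛ h))).trans
      (Nat.le_add_right _ _)
  · rw [← card_sdiff_of_subset (hΛ.subset_of_card_le hL h)]
    refine (card_le_card fun v hv => ?_).trans (card_union_le _ _)
    simp only [mem_union, mem_inter, mem_sdiff] at hv ⊢
    tauto

lemma LexSegmentsMinimizeInter.succ {m : ℕ} (hmin : LexSegmentsMinimizeInter (m + 1)) :
    LexSegmentsMinimizeInter (m + 2) := by
  intro d B L T hB hL hT hcard
  rcases T.eq_empty_or_nonempty with rfl | hne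
  · simp
  obtain ⟨Λ, hΛ⟩ := exists_isSliceCompression hB.sum_eq
  obtain ⟨E, hEd, hcount⟩ := hT.exists_card_inter_eq hne
  rw [hcount L hL.sum_eq, hcount B hB.sum_eq]
  have hsum := hΛ.sum_card_lastSlice_le hmin hB hL hcard (E := E) (by omega)
  have hsum_succ := hΛ.sum_card_lastSlice_le hmin hB hL hcard (E := E + 1) (by omega)
  rw [sum_range_succ, sum_range_succ] at hsum_succ
  have hslice := hmin (d - E) _ _ _ (hB.slice E) (hΛ.isLexSegment E) (hT.slice hEd)
    (hΛ.card_eq E).le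
  have hcompare := (hL.slice hEd).card_inter_le (hΛ.isLexSegment E) (T := lastSlice T E)
  rw [hΛ.card_eq E] at hcompare
  omega

lemma lexSegmentsMinimizeInter_of_le_one {n : ℕ} (hn : n ≤ 1) : LexSegmentsMinimizeInter n := by
  intro d B L T hB hL _ hcard
  have huniq : ∀ u v : Fin n → ℕ, ∑ i, u i = d → ∑ i, v i = d → u = v := by
    intro u v hu hv
    have : Subsingleton (Fin n) := Fin.subsingleton_iff_le_one.2 hn
    funext i
    rwa [← hv, Fintype.sum_subsingleton _ i, Fintype.sum_subsingleton _ i] at hu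
  refine card_le_card (inter_subset_inter_right fun u hu => ?_)
  obtain ⟨v, hv⟩ := card_pos.1 ((card_pos.2 ⟨u, hu⟩).trans_le hcard)
  exact huniq v u (hB.sum_eq v hv) (hL.sum_eq u hu) ▸ hv

theorem lexSegmentsMinimizeInter : ∀ n, LexSegmentsMinimizeInter n
  | 0 | 1 => lexSegmentsMinimizeInter_of_le_one (by norm_num)
  | n + 2 => (lexSegmentsMinimizeInter (n + 1)).succ

end Counting

section Exponents

open Finset Pointwise

variable {n : ℕ}

/-- Sets of exponents that are closed, in each degree, under passing to a lexicographically larger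
exponent. -/
def IsLexClosed (L : Set (Fin n →₀ ℕ)) : Prop :=
  ∀ u ∈ L, ∀ v : Fin n →₀ ℕ, v.degree = u.degree → lexLt n u v → v ∈ L

/-- Sets of exponents that are closed, in each degree, under passing to a larger exponent for the
opposite lexicographic order. -/
def IsOplexClosed (C : Set (Fin n →₀ ℕ)) : Prop :=
  ∀ u ∈ C, ∀ v : Fin n →₀ ℕ, v.degree = u.degree → oplexLt n u v → v ∈ C

/-- Sets of exponents that are closed under replacing a variable by one of smaller index. -/
def IsExchangeClosed (B : Set (Fin n →₀ ℕ)) : Prop :=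
  ∀ (v : Fin n →₀ ℕ) (i j : Fin n),
    i < j → v + Finsupp.single j 1 ∈ B → v + Finsupp.single i 1 ∈ B

lemma lexLt_add_single_of_lt (v : Fin n →₀ ℕ) {i j : Fin n} (hij : i < j) :
    lexLt n (v + Finsupp.single j 1) (v + Finsupp.single i 1) := by
  refine ⟨i, fun k hk => ?_, ?_⟩
  · simp [hk.ne, (hk.trans hij).ne]
  · simp [hij.ne]

lemma oplexLt_add_single_of_lt (v : Fin n →₀ ℕ) {i j : Fin n} (hij : i < j) :
    oplexLt n (v + Finsupp.single i 1) (v + Finsupp.single j 1) := by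
  refine ⟨j, fun k hk => ?_, ?_⟩
  · have hk : j < k := hk
    simp [hk.ne', (hij.trans hk).ne']
  · simp [hij.ne']

lemma isLexClosed_univ : IsLexClosed (Set.univ : Set (Fin n →₀ ℕ)) :=
  fun _ _ _ _ _ => Set.mem_univ _

lemma IsLexClosed.isExchangeClosed {L : Set (Fin n →₀ ℕ)} (hL : IsLexClosed L) :
    IsExchangeClosed L := fun v i j hij h =>
  hL _ h _ (by simp only [map_add, Finsupp.degree_single]) (lexLt_add_single_of_lt v hij)

lemma IsOplexClosed.add_single_mem {C : Set (Fin n →₀ ℕ)} (hC : IsOplexClosed C)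
    {v : Fin n →₀ ℕ} {i j : Fin n} (hij : i < j) (h : v + Finsupp.single i 1 ∈ C) :
    v + Finsupp.single j 1 ∈ C :=
  hC _ h _ (by simp only [map_add, Finsupp.degree_single]) (oplexLt_add_single_of_lt v hij)

open scoped Classical in
/-- The exponents of degree `d` in the set `A`. -/
def degreePart (A : Set (Fin n →₀ ℕ)) (d : ℕ) : Finset (Fin n →₀ ℕ) :=
  {u ∈ finsuppAntidiag univ d | u ∈ A}

lemma mem_degreePart {A : Set (Fin n →₀ ℕ)} {d : ℕ} {u : Fin n →₀ ℕ} :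
    u ∈ degreePart A d ↔ u.degree = d ∧ u ∈ A := by
  simp [degreePart, Finsupp.degree_eq_sum]

lemma degreePart_mono {A B : Set (Fin n →₀ ℕ)} (h : A ⊆ B) (d : ℕ) :
    degreePart A d ⊆ degreePart B d := fun _ hu =>
  mem_degreePart.2 ((mem_degreePart.1 hu).imp_right fun hA => h hA)

/-- The exponents of degree `d` in `A`, viewed as functions. -/
def degreePartFun (A : Set (Fin n →₀ ℕ)) (d : ℕ) : Finset (Fin n → ℕ) :=
  (degreePart A d).map ⟨_, DFunLike.coe_injective⟩

lemma mem_degreePartFun {A : Set (Fin n →₀ ℕ)} {d : ℕ} {u : Fin n → ℕ} :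
    u ∈ degreePartFun A d ↔ ∑ i, u i = d ∧ Finsupp.equivFunOnFinite.symm u ∈ A := by
  rw [degreePartFun, Finset.mem_map]
  constructor
  · rintro ⟨v, hv, rfl⟩
    obtain ⟨hd, hA⟩ := mem_degreePart.1 hv
    exact ⟨(Finsupp.degree_eq_sum v).symm.trans hd, by
      simpa only [Function.Embedding.coeFn_mk, Finsupp.equivFunOnFinite_symm_coe] using hA⟩
  · rintro ⟨hd, hA⟩
    exact ⟨_, mem_degreePart.2 ⟨(Finsupp.degree_eq_sum _).trans hd, hA⟩, rfl⟩

lemma degreePartFun_inter (A T : Set (Fin n →₀ ℕ)) (d : ℕ) :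
    degreePartFun (A ∩ T) d = degreePartFun A d ∩ degreePartFun T d := by
  ext u
  simp only [mem_degreePartFun, Finset.mem_inter, Set.mem_inter_iff]
  tauto

lemma IsLexClosed.isLexSegment {L : Set (Fin n →₀ ℕ)} (hL : IsLexClosed L) (d : ℕ) :
    IsLexSegment (degreePartFun L d) d where
  sum_eq u hu := (mem_degreePartFun.1 hu).1
  mem_of_lt u hu v hv huv := by
    obtain ⟨hd, hu⟩ := mem_degreePartFun.1 hu
    refine mem_degreePartFun.2 ⟨hv, hL _ hu _ ?_ huv⟩
    rw [Finsupp.degree_eq_sum, Finsupp.degree_eq_sum]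
    exact hv.trans hd.symm

lemma IsLexClosed.subset_of_card_le {L L' : Set (Fin n →₀ ℕ)} (hL : IsLexClosed L)
    (hL' : IsLexClosed L') (hcard : ∀ d, #(degreePart L d) ≤ #(degreePart L' d)) : L ⊆ L' := by
  intro u hu
  have hsub := (hL.isLexSegment u.degree).subset_of_card_le (hL'.isLexSegment u.degree)
    (by simpa only [degreePartFun, card_map] using hcard u.degree)
  have hu' := hsub (mem_map_of_mem _ (mem_degreePart.2 ⟨rfl, hu⟩))
  exact (mem_degreePart.1 ((mem_map' _).1 hu')).2

lemma IsExchangeClosed.isStronglyStable {B : Set (Fin n →₀ ℕ)} (hB : IsExchangeClosed B) (d : ℕ) :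
    IsStronglyStable (degreePartFun B d) d where
  sum_eq u hu := (mem_degreePartFun.1 hu).1
  mem_of_lt v i j hij h := by
    have hsymm (k : Fin n) : Finsupp.equivFunOnFinite.symm (v + Pi.single k 1) =
        Finsupp.equivFunOnFinite.symm v + Finsupp.single k 1 := by
      ext l
      simp [Finsupp.single_eq_pi_single]
    obtain ⟨hd, h⟩ := mem_degreePartFun.1 h
    rw [hsymm] at h
    refine mem_degreePartFun.2 ⟨?_, hsymm i ▸ hB _ i j hij h⟩
    rwa [sum_add_single] at hd ⊢

lemma IsOplexClosed.isOplexLowerSet {T : Set (Fin n →₀ ℕ)} (hT : IsOplexClosed Tᶜ) (d : ℕ) :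
    IsOplexLowerSet (degreePartFun T d) d where
  sum_eq u hu := (mem_degreePartFun.1 hu).1
  mem_of_lt u hu v hv hvu := by
    obtain ⟨hd, hu⟩ := mem_degreePartFun.1 hu
    refine mem_degreePartFun.2 ⟨hv, by_contra fun h =>
      hT _ h (Finsupp.equivFunOnFinite.symm u) ?_ hvu hu⟩
    rw [Finsupp.degree_eq_sum, Finsupp.degree_eq_sum]
    exact hd.trans hv.symm

theorem card_degreePart_inter_le {B L T : Set (Fin n →₀ ℕ)} (hB : IsExchangeClosed B)
    (hL : IsLexClosed L) (hT : IsOplexClosed Tᶜ) {d : ℕ}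
    (hcard : #(degreePart L d) ≤ #(degreePart B d)) :
    #(degreePart (L ∩ T) d) ≤ #(degreePart (B ∩ T) d) := by
  have hfun (A : Set (Fin n →₀ ℕ)) : #(degreePartFun A d) = #(degreePart A d) := card_map _
  have h := lexSegmentsMinimizeInter n d _ _ _ (hB.isStronglyStable d) (hL.isLexSegment d)
    (hT.isOplexLowerSet d) (by rwa [hfun, hfun])
  rwa [← degreePartFun_inter, ← degreePartFun_inter, hfun, hfun] at h

lemma card_degreePart_union (A C : Set (Fin n →₀ ℕ)) (d : ℕ) :
    #(degreePart (A ∪ C) d) = #(degreePart C d) + #(degreePart (A ∩ Cᶜ) d) := by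
  classical
  rw [← card_union_of_disjoint]
  · congr 1
    ext u
    simp only [mem_union, mem_degreePart, Set.mem_union, Set.mem_inter_iff, Set.mem_compl_iff]
    tauto
  · exact disjoint_left.2 fun u hu hu' => (mem_degreePart.1 hu').2.2 (mem_degreePart.1 hu).2

theorem card_degreePart_union_le {B L C : Set (Fin n →₀ ℕ)} (hB : IsExchangeClosed B)
    (hL : IsLexClosed L) (hC : IsOplexClosed C) {d : ℕ}
    (hcard : #(degreePart L d) ≤ #(degreePart B d)) :
    #(degreePart (L ∪ C) d) ≤ #(degreePart (B ∪ C) d) := by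
  rw [card_degreePart_union, card_degreePart_union]
  exact Nat.add_le_add_left (card_degreePart_inter_le hB hL (by rwa [compl_compl]) hcard) _

/-- Every variable of `m` has index at most that of every variable of `c`. -/
def IndicesLE (m c : Fin n →₀ ℕ) : Prop :=
  ∀ i k, m i ≠ 0 → c k ≠ 0 → i ≤ k

lemma isOplexClosed_compl_indicesLE (c : Fin n →₀ ℕ) :
    IsOplexClosed {m : Fin n →₀ ℕ | IndicesLE m c}ᶜ := by
  rintro u hu v - ⟨i, heq, hlt⟩ hv
  refine hu fun k l hk hl => le_of_not_gt fun hlk => ?_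
  have hil : i ≤ l := hv i l (by omega) hl
  exact hlk.not_ge (hv k l (heq k (hil.trans_lt hlk) ▸ hk) hl)

lemma weight_add_single_lt (v : Fin n →₀ ℕ) {i k : Fin n} (hki : k < i) :
    Finsupp.weight (fun j : Fin n => (j : ℕ)) (v + Finsupp.single k 1) <
      Finsupp.weight (fun j : Fin n => (j : ℕ)) (v + Finsupp.single i 1) := by
  simpa [map_add, Finsupp.weight_single] using hki

-- Among all decompositions `u = m + c`, take one minimizing first `deg c`, then the sum of the
-- indices of the variables of `m`.
lemma exists_add_eq_indicesLE {L C : Set (Fin n →₀ ℕ)} (hLup : IsUpperSet L)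
    (hL : IsExchangeClosed L) (hC : IsOplexClosed C) {u : Fin n →₀ ℕ} (hu : u ∈ L + C) :
    ∃ m ∈ L, ∃ c, Minimal (· ∈ C) c ∧ IndicesLE m c ∧ m + c = u := by
  classical
  obtain ⟨m₀, hm₀, c₀, hc₀, rfl⟩ := hu
  obtain ⟨⟨m, c⟩, hmem, hmin⟩ := exists_min_image
    {p ∈ antidiagonal (m₀ + c₀) | p.1 ∈ L ∧ p.2 ∈ C}
    (fun p => toLex (p.2.degree, Finsupp.weight (fun j : Fin n => (j : ℕ)) p.1))
    ⟨(m₀, c₀), by simp [hm₀, hc₀]⟩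
  obtain ⟨hmc, hm, hc⟩ : m + c = m₀ + c₀ ∧ m ∈ L ∧ c ∈ C := by simpa using hmem
  have hmin {m' c'} (hm' : m' ∈ L) (hc' : c' ∈ C) (h : m' + c' = m + c) :
      toLex (c.degree, Finsupp.weight (fun j : Fin n => (j : ℕ)) m) ≤
        toLex (c'.degree, Finsupp.weight (fun j : Fin n => (j : ℕ)) m') :=
    hmin (m', c') (by simp [h, hmc, hm', hc'])
  refine ⟨m, hm, c, by_contra fun hnot => ?_, fun i k hi hk => ?_, hmc⟩
  · obtain ⟨c', hlt, hc'⟩ := exists_lt_of_not_minimal hc hnot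
    obtain ⟨w, rfl⟩ := exists_add_of_le hlt.le
    have hw : w.degree ≠ 0 := by
      rw [Ne, Finsupp.degree_eq_zero_iff]
      rintro rfl
      simp at hlt
    refine (hmin (hLup (le_self_add (a := m) (b := w)) hm) hc' (by abel)).not_gt
      (Prod.Lex.toLex_lt_toLex.2 (Or.inl ?_))
    have := map_add Finsupp.degree c' w
    omega
  · by_contra! hki
    obtain ⟨m, rfl⟩ := exists_add_of_le (Finsupp.single_le_iff.2 (Nat.one_le_iff_ne_zero.2 hi))
    obtain ⟨c, rfl⟩ := exists_add_of_le (Finsupp.single_le_iff.2 (Nat.one_le_iff_ne_zero.2 hk))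
    rw [add_comm] at hm hc
    refine (hmin (hL m k i hki hm) (hC.add_single_mem hki hc) (by abel)).not_gt
      (Prod.Lex.toLex_lt_toLex.2 (Or.inr ⟨by simp [add_comm], ?_⟩))
    rw [add_comm _ m]
    exact weight_add_single_lt m hki

lemma IndicesLE.le_of_lt_of_add_eq {m m' c c' : Fin n →₀ ℕ} (h : IndicesLE m c)
    (hadd : m + c = m' + c') (h' : IndicesLE m' c') {k : Fin n} (hk : c' k < c k) : c' ≤ c := by
  intro l
  by_contra! hl
  have hadd (i : Fin n) : m i + c i = m' i + c' i := by
    simpa only [Finsupp.add_apply] using DFunLike.congr_fun hadd i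
  have hk' := h' k l (by have := hadd k; omega) (by omega)
  have hl' := h l k (by have := hadd l; omega) (by omega)
  obtain rfl := le_antisymm hk' hl'
  omega

lemma IndicesLE.eq_of_add_eq {C : Set (Fin n →₀ ℕ)} {m m' c c' : Fin n →₀ ℕ}
    (h : IndicesLE m c) (h' : IndicesLE m' c') (hc : Minimal (· ∈ C) c)
    (hc' : Minimal (· ∈ C) c') (hadd : m + c = m' + c') : c = c' := by
  by_cases hle : c ≤ c'
  · exact hc'.eq_of_le hc.prop hle
  · obtain ⟨k, hk⟩ := not_forall.1 hle
    exact (hc.eq_of_le hc'.prop (h.le_of_lt_of_add_eq hadd h' (not_le.1 hk))).symm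

/-- The sums `m + c` of degree `d` with `m ∈ A` and the variables of `m` before those of `c`. -/
def sortedSums (A : Set (Fin n →₀ ℕ)) (d : ℕ) (c : Fin n →₀ ℕ) : Finset (Fin n →₀ ℕ) :=
  (degreePart (A ∩ {m | IndicesLE m c}) (d - c.degree)).map (addRightEmbedding c)

open scoped Classical in
/-- The minimal elements of `C` of degree at most `d`. -/
def minimalExponents (C : Set (Fin n →₀ ℕ)) (d : ℕ) : Finset (Fin n →₀ ℕ) :=
  (range (d + 1)).biUnion (degreePart {c | Minimal (· ∈ C) c})

lemma mem_minimalExponents {C : Set (Fin n →₀ ℕ)} {d : ℕ} {c : Fin n →₀ ℕ} :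
    c ∈ minimalExponents C d ↔ c.degree ≤ d ∧ Minimal (· ∈ C) c := by
  simp [minimalExponents, mem_degreePart]

lemma mem_sortedSums {A : Set (Fin n →₀ ℕ)} {d : ℕ} {c u : Fin n →₀ ℕ} :
    u ∈ sortedSums A d c ↔ ∃ m ∈ A, m.degree = d - c.degree ∧ IndicesLE m c ∧ m + c = u := by
  simp only [sortedSums, Finset.mem_map, mem_degreePart, Set.mem_inter_iff, Set.mem_ofPred_eq,
    addRightEmbedding_apply]
  tauto

open scoped Classical in
lemma degreePart_add_subset {L C : Set (Fin n →₀ ℕ)} (hLup : IsUpperSet L)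
    (hL : IsExchangeClosed L) (hC : IsOplexClosed C) (d : ℕ) :
    degreePart (L + C) d ⊆ (minimalExponents C d).biUnion (sortedSums L d) := by
  intro u hu
  obtain ⟨hd, hu⟩ := mem_degreePart.1 hu
  obtain ⟨m, hm, c, hc, hmc, rfl⟩ := exists_add_eq_indicesLE hLup hL hC hu
  rw [map_add] at hd
  exact mem_biUnion.2 ⟨c, mem_minimalExponents.2 ⟨by omega, hc⟩,
    mem_sortedSums.2 ⟨m, hm, by omega, hmc, rfl⟩⟩

lemma sum_card_sortedSums_le (A C : Set (Fin n →₀ ℕ)) (d : ℕ) :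
    ∑ c ∈ minimalExponents C d, #(sortedSums A d c) ≤ #(degreePart (A + C) d) := by
  classical
  rw [← card_biUnion]
  · refine card_le_card (biUnion_subset.2 fun c hc u hu => ?_)
    obtain ⟨hcd, hc⟩ := mem_minimalExponents.1 hc
    obtain ⟨m, hm, hmd, -, rfl⟩ := mem_sortedSums.1 hu
    refine mem_degreePart.2 ⟨?_, Set.add_mem_add hm hc.prop⟩
    rw [map_add]
    omega
  · refine fun c hc c' hc' hne => disjoint_left.2 fun u hu hu' => hne ?_
    obtain ⟨m, -, -, hmc, rfl⟩ := mem_sortedSums.1 hu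
    obtain ⟨m', -, -, hmc', hadd⟩ := mem_sortedSums.1 hu'
    exact hmc.eq_of_add_eq hmc' (mem_minimalExponents.1 hc).2 (mem_minimalExponents.1 hc').2
      hadd.symm

theorem card_degreePart_add_le {B L C : Set (Fin n →₀ ℕ)} (hB : IsExchangeClosed B)
    (hLup : IsUpperSet L) (hL : IsLexClosed L) (hC : IsOplexClosed C)
    (hcard : ∀ d, #(degreePart L d) ≤ #(degreePart B d)) (d : ℕ) :
    #(degreePart (L + C) d) ≤ #(degreePart (B + C) d) := by
  classical
  calc #(degreePart (L + C) d)
      ≤ #((minimalExponents C d).biUnion (sortedSums L d)) :=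
        card_le_card (degreePart_add_subset hLup hL.isExchangeClosed hC d)
    _ ≤ ∑ c ∈ minimalExponents C d, #(sortedSums L d c) := card_biUnion_le
    _ ≤ ∑ c ∈ minimalExponents C d, #(sortedSums B d c) := by
        refine sum_le_sum fun c _ => ?_
        rw [sortedSums, sortedSums, card_map, card_map]
        exact card_degreePart_inter_le hB hL (isOplexClosed_compl_indicesLE c) (hcard _)
    _ ≤ #(degreePart (B + C) d) := sum_card_sortedSums_le B C d

end Exponents

/-! ### Leading exponents -/

section LinearIndependence

variable {ι σ : Type*}

lemma linearIndependent_of_triangular {R α : Type*} [Ring R] [NoZeroDivisors R] [LinearOrder α]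
    {v : ι → σ → R} {τ : ι → σ} (hτ : Function.Injective τ) (key : σ → α)
    (hdiag : ∀ k, v k (τ k) ≠ 0)
    (htri : ∀ k x, v k x ≠ 0 → x = τ k ∨ key x < key (τ k)) : LinearIndependent R v := by
  classical
  refine linearIndependent_iff'.2 fun s c hc => ?_
  by_contra! ⟨i, hi, hci⟩
  obtain ⟨k, hk, hmax⟩ := Finset.exists_max_image {k ∈ s | c k ≠ 0} (fun k => key (τ k))
    ⟨i, Finset.mem_filter.2 ⟨hi, hci⟩⟩
  obtain ⟨hks, hck⟩ := Finset.mem_filter.1 hk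
  have heval : ∑ l ∈ s, c l * v l (τ k) = 0 := by
    simpa only [Finset.sum_apply, Pi.smul_apply, smul_eq_mul, Pi.zero_apply] using
      congrFun hc (τ k)
  rw [Finset.sum_eq_single_of_mem k hks] at heval
  · exact mul_ne_zero hck (hdiag k) heval
  · refine fun l hl hlk => by_contra fun hne => ?_
    obtain ⟨hcl, hvl⟩ := mul_ne_zero_iff.1 hne
    rcases htri l _ hvl with h | h
    · exact hlk (hτ h).symm
    · exact (hmax l (Finset.mem_filter.2 ⟨hl, hcl⟩)).not_gt h

lemma span_columns_eq_top [Finite ι] {F : Type*} [Field F] {v : ι → σ → F}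
    (hv : LinearIndependent F v) :
    Submodule.span F (Set.range fun x k => v k x) = ⊤ := by
  classical
  have := Fintype.ofFinite ι
  by_contra hne
  obtain ⟨f, hf, hle⟩ := Submodule.exists_le_ker_of_lt_top _ (lt_top_iff_ne_top.2 hne)
  refine hf (LinearMap.pi_ext' fun k => LinearMap.ext_ring ?_)
  refine Fintype.linearIndependent_iff.1 hv (fun k => f (Pi.single k 1)) (funext fun x => ?_) k
  have hx : f (fun k => v k x) = 0 := hle (Submodule.subset_span ⟨x, rfl⟩)
  rw [← LinearMap.sum_single_apply _ (fun k => v k x), map_sum] at hx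
  rw [Finset.sum_apply, Pi.zero_apply, ← hx]
  refine Finset.sum_congr rfl fun k _ => ?_
  rw [Pi.smul_apply, smul_eq_mul, mul_comm, ← smul_eq_mul, ← map_smul, ← Pi.single_smul,
    smul_eq_mul, mul_one]

lemma exists_minor_ne_zero [Fintype ι] [DecidableEq ι] {F : Type*} [Field F] {v : ι → σ → F}
    (hv : LinearIndependent F v) : ∃ e : ι → σ, (Matrix.of fun k l => v k (e l)).det ≠ 0 := by
  obtain ⟨f, hf, -, hli⟩ :=
    Submodule.exists_fun_fin_finrank_span_eq F (Set.range fun x k => v k x)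
  choose e he using hf
  have hcard : Fintype.card ι =
      Module.finrank F (Submodule.span F (Set.range fun x k => v k x)) := by
    rw [span_columns_eq_top hv, finrank_top, Module.finrank_fintype_fun_eq_card]
  let E := Fintype.equivFinOfCardEq hcard
  have hcols : LinearIndependent F (Matrix.of fun k l => v k (e (E l))).col := by
    rw [show (Matrix.of fun k l => v k (e (E l))).col = f ∘ E from funext fun l => he (E l)]
    exact hli.comp E E.injective
  exact ⟨e ∘ E, ((Matrix.isUnit_iff_isUnit_det _).1
    (Matrix.linearIndependent_cols_iff_isUnit.1 hcols)).ne_zero⟩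

-- The witness `D` is a minor that does not vanish under `θ₀`.
lemma exists_forall_linearIndependent_map [Finite ι] {R F : Type*} [CommRing R] [Field F]
    {v : ι → σ → R} (θ₀ : R →+* F) (h : LinearIndependent F fun k x => θ₀ (v k x)) :
    ∃ D : R, θ₀ D ≠ 0 ∧ ∀ {S : Type*} [CommRing S] [IsDomain S] (θ : R →+* S), θ D ≠ 0 →
      LinearIndependent S fun k x => θ (v k x) := by
  classical
  have := Fintype.ofFinite ι
  obtain ⟨e, he⟩ := exists_minor_ne_zero h
  refine ⟨(Matrix.of fun k l => v k (e l)).det, ?_, fun θ hθ => ?_⟩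
  · rwa [RingHom.map_det]
  · rw [RingHom.map_det] at hθ
    exact (Matrix.linearIndependent_rows_of_det_ne_zero hθ).of_comp (LinearMap.funLeft _ _ e)

end LinearIndependence

section LeadingExponents

variable {n : ℕ} {R : Type*} [CommRing R] {r : (Fin n →₀ ℕ) → (Fin n →₀ ℕ) → Prop}

/-- `u` is the largest exponent of `p` for the strict order `r`. -/
def IsLeadingExponent (r : (Fin n →₀ ℕ) → (Fin n →₀ ℕ) → Prop) (p : MvPolynomial (Fin n) R)
    (u : Fin n →₀ ℕ) : Prop :=
  coeff u p ≠ 0 ∧ ∀ v, coeff v p ≠ 0 → v = u ∨ r v u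

lemma exists_isLeadingExponent_lexLt {p : MvPolynomial (Fin n) R} (hp : p ≠ 0) :
    ∃ u, IsLeadingExponent (lexLt n) p u := by
  obtain ⟨u, hu, hmax⟩ := Finset.exists_max_image p.support toLex (support_nonempty.2 hp)
  refine ⟨u, mem_support_iff.1 hu, fun v hv => ?_⟩
  exact (hmax v (mem_support_iff.2 hv)).eq_or_lt.imp_left fun h => toLex.injective h

lemma IsLeadingExponent.monomial_mul {p : MvPolynomial (Fin n) R} {u : Fin n →₀ ℕ}
    (h : IsLeadingExponent (lexLt n) p u) (w : Fin n →₀ ℕ) :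
    IsLeadingExponent (lexLt n) (monomial w 1 * p) (w + u) := by
  refine ⟨by rw [coeff_monomial_mul, one_mul]; exact h.1, fun v hv => ?_⟩
  rw [coeff_monomial_mul'] at hv
  obtain ⟨hle, hv⟩ := ite_ne_right_iff.1 hv
  obtain ⟨v, rfl⟩ := exists_add_of_le hle
  rw [add_tsub_cancel_left, one_mul] at hv
  exact (h.2 v hv).imp (congrArg (w + ·)) fun hlt =>
    (add_lt_add_right hlt (toLex w) : toLex w + toLex v < toLex w + toLex u)

/-- The leading exponents, for the order `r`, of the homogeneous elements of `A`. -/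
def leadingExponents (r : (Fin n →₀ ℕ) → (Fin n →₀ ℕ) → Prop)
    (A : Ideal (MvPolynomial (Fin n) R)) : Set (Fin n →₀ ℕ) :=
  {u | ∃ f ∈ A, f.IsHomogeneous u.degree ∧ IsLeadingExponent r f u}

lemma isUpperSet_leadingExponents_lexLt (A : Ideal (MvPolynomial (Fin n) R)) :
    IsUpperSet (leadingExponents (lexLt n) A) := by
  rintro u v huv ⟨f, hf, hdeg, hlead⟩
  obtain ⟨w, rfl⟩ := exists_add_of_le huv
  refine ⟨monomial w 1 * f, A.mul_mem_left _ hf, ?_, add_comm u w ▸ hlead.monomial_mul w⟩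
  rw [map_add, add_comm]
  exact (isHomogeneous_monomial 1 rfl).mul hdeg

/-- The coefficients of a polynomial at the exponents in `U`. -/
def coeffsOn (U : Set (Fin n →₀ ℕ)) : MvPolynomial (Fin n) R →ₗ[R] U → R :=
  LinearMap.pi fun u => lcoeff R u.1

@[simp]
lemma coeffsOn_apply (U : Set (Fin n →₀ ℕ)) (p : MvPolynomial (Fin n) R) (u : U) :
    coeffsOn U p u = coeff u.1 p :=
  rfl

lemma coeffsOn_map {S : Type*} [CommRing S] (U : Set (Fin n →₀ ℕ)) (θ : R →+* S)
    (p : MvPolynomial (Fin n) R) : coeffsOn U (map θ p) = fun u => θ (coeffsOn U p u) :=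
  funext fun u => coeff_map θ p u.1

lemma exists_forall_linearIndependent_coeffsOn_map {ι F : Type*} [Finite ι] [Field F]
    (U : Set (Fin n →₀ ℕ)) {q : ι → MvPolynomial (Fin n) R} (θ₀ : R →+* F)
    (h : LinearIndependent F fun k => coeffsOn U (map θ₀ (q k))) :
    ∃ D : R, θ₀ D ≠ 0 ∧ ∀ {S : Type*} [CommRing S] [IsDomain S] (θ : R →+* S), θ D ≠ 0 →
      LinearIndependent S fun k => coeffsOn U (map θ (q k)) := by
  simp only [coeffsOn_map] at h ⊢
  exact exists_forall_linearIndependent_map θ₀ h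

-- A nonzero combination of the `p k` with a nonzero coefficient in `U` has its leading exponent
-- in `U`, so already its coefficients at the leading exponents in `U` are not all zero.
lemma card_le_card_degreePart_leadingExponents {ι : Type*} [Fintype ι] [Nontrivial R]
    {A : Ideal (MvPolynomial (Fin n) R)} {U : Set (Fin n →₀ ℕ)} (hU : IsLexClosed U) {d : ℕ}
    {p : ι → MvPolynomial (Fin n) R} (hA : ∀ k, p k ∈ A) (hd : ∀ k, (p k).IsHomogeneous d)
    (hp : LinearIndependent R fun k => coeffsOn U (p k)) :
    Fintype.card ι ≤ (degreePart (U ∩ leadingExponents (lexLt n) A) d).card := by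
  set X := degreePart (U ∩ leadingExponents (lexLt n) A) d
  have hX : LinearIndependent R fun k => coeffsOn (X : Set (Fin n →₀ ℕ)) (p k) := by
    refine Fintype.linearIndependent_iff.2 fun c hc =>
      Fintype.linearIndependent_iff.1 hp c ?_
    simp only [← map_smul, ← map_sum] at hc ⊢
    set f := ∑ k, c k • p k
    have hfA : f ∈ A := sum_mem fun k _ => A.smul_of_tower_mem (c k) (hA k)
    have hfd : f.IsHomogeneous d :=
      Submodule.sum_mem _ fun k _ => (homogeneousSubmodule (Fin n) R d).smul_mem (c k) (hd k)
    by_contra hne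
    obtain ⟨⟨u, hu⟩, hfu⟩ := Function.ne_iff.1 hne
    obtain ⟨v, hv⟩ := exists_isLeadingExponent_lexLt (ne_zero_iff.2 ⟨u, hfu⟩)
    have hvd : v.degree = d := not_imp_comm.1 hfd.coeff_eq_zero hv.1
    have hvU : v ∈ U := by
      rcases hv.2 u hfu with rfl | hlt
      · exact hu
      · exact hU u hu v (hvd.trans (not_imp_comm.1 hfd.coeff_eq_zero hfu).symm) hlt
    exact hv.1 (congrFun hc ⟨v, mem_degreePart.2 ⟨hvd, hvU, f, hfA, hvd ▸ hfd, hv⟩⟩)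
  simpa using hX.fintype_card_le_finrank

end LeadingExponents

section

variable {K n}

lemma exists_linearIndependent_coeffsOn_univ (A : Ideal (PS K n)) (d : ℕ) :
    ∃ v : Fin (hilb K n A d) → PS K n, (∀ k, v k ∈ A) ∧ (∀ k, (v k).IsHomogeneous d) ∧
      LinearIndependent K fun k => coeffsOn Set.univ (v k) := by
  have := finite_homogeneousPart A d
  let b := Module.finBasis K ↥(A.restrictScalars K ⊓ homogeneousSubmodule (Fin n) K d)
  refine ⟨fun k => b k, fun k => (b k).2.1, fun k => (b k).2.2,
    (b.linearIndependent.map' (Submodule.subtype _) (Submodule.ker_subtype _)).map'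
      (coeffsOn Set.univ) (LinearMap.ker_eq_bot'.2 fun f hf => ?_)⟩
  ext u
  exact congrFun hf ⟨u, trivial⟩

lemma hilb_eq_card_degreePart_leadingExponents (A : Ideal (PS K n)) (d : ℕ) :
    hilb K n A d = (degreePart (leadingExponents (lexLt n) A) d).card := by
  have := finite_homogeneousPart A d
  apply le_antisymm
  · obtain ⟨v, hvA, hvd, hv⟩ := exists_linearIndependent_coeffsOn_univ A d
    simpa using card_le_card_degreePart_leadingExponents isLexClosed_univ hvA hvd hv
  · choose f hfA hfd hlead using fun u : degreePart (leadingExponents (lexLt n) A) d =>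
      (mem_degreePart.1 u.2).2
    let v (u : degreePart (leadingExponents (lexLt n) A) d) :
        ↥(A.restrictScalars K ⊓ homogeneousSubmodule (Fin n) K d) :=
      ⟨f u, hfA u, (mem_degreePart.1 u.2).1 ▸ hfd u⟩
    have hv : LinearIndependent K v := by
      refine .of_comp ((coeffsOn Set.univ).comp (Submodule.subtype _))
        (linearIndependent_of_triangular (τ := fun u => ⟨u.1, trivial⟩) ?_
          (fun x => toLex x.1) (fun u => (hlead u).1) fun u x hx => ?_)
      · exact fun u w h => Subtype.ext (Subtype.mk.inj h)
      · exact ((hlead u).2 x.1 hx).imp_left fun h => Subtype.ext h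
    simpa [hilb] using hv.fintype_card_le_finrank

lemma card_le_hilb {κ : Type*} [Fintype κ] {A : Ideal (PS K n)} {d : ℕ} {v : κ → PS K n}
    (hv : ∀ k, v k ∈ A) (hd : ∀ k, (v k).IsHomogeneous d)
    (hli : LinearIndependent K fun k => coeffsOn Set.univ (v k)) :
    Fintype.card κ ≤ hilb K n A d := by
  rw [hilb_eq_card_degreePart_leadingExponents]
  simpa using card_le_card_degreePart_leadingExponents isLexClosed_univ hv hd hli

end

/-! ### Monomial ideals -/

section MonomialIdeals

open Pointwise

variable {K n} {A B : Ideal (PS K n)} {s : Set (Fin n →₀ ℕ)}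

/-- The exponents of the monomials in `A`. -/
def monomialExponents (A : Ideal (PS K n)) : Set (Fin n →₀ ℕ) :=
  {u | monomial u 1 ∈ A}

lemma isUpperSet_monomialExponents (A : Ideal (PS K n)) : IsUpperSet (monomialExponents A) := by
  intro u v huv hu
  obtain ⟨w, rfl⟩ := exists_add_of_le huv
  have h : monomial (u + w) (1 : K) = monomial w 1 * monomial u 1 := by
    rw [monomial_mul, one_mul, add_comm]
  exact (congrArg (· ∈ A) h).mpr (A.mul_mem_left _ hu)

lemma monomialExponents_subset_leadingExponents (A : Ideal (PS K n))
    (r : (Fin n →₀ ℕ) → (Fin n →₀ ℕ) → Prop) :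
    monomialExponents A ⊆ leadingExponents r A := fun u hu =>
  ⟨monomial u 1, hu, isHomogeneous_monomial 1 rfl, by simp, fun v hv =>
    .inl (of_not_not fun h => hv (by rw [coeff_monomial, if_neg (Ne.symm h)]))⟩

lemma monomialExponents_mono (h : A ≤ B) : monomialExponents A ⊆ monomialExponents B :=
  fun _ hu => h hu

lemma monomialExponents_add_subset (A B : Ideal (PS K n)) :
    monomialExponents A + monomialExponents B ⊆ monomialExponents (A * B) := by
  rintro _ ⟨u, hu, v, hv, rfl⟩
  have h := Ideal.mul_mem_mul hu hv
  rwa [monomial_mul, one_mul] at h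

lemma card_degreePart_monomialExponents_le_hilb (A : Ideal (PS K n)) (d : ℕ) :
    (degreePart (monomialExponents A) d).card ≤ hilb K n A d := by
  rw [hilb_eq_card_degreePart_leadingExponents]
  exact Finset.card_le_card (degreePart_mono (monomialExponents_subset_leadingExponents A _) d)

/-- The ideal spanned by the monomials with exponents in `s`. -/
def monomialSpan (s : Set (Fin n →₀ ℕ)) : Ideal (PS K n) :=
  Ideal.span ((monomial · 1) '' s)

lemma mem_monomialSpan (hs : IsUpperSet s) {f : PS K n} :
    f ∈ monomialSpan s ↔ ∀ u ∈ f.support, u ∈ s :=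
  mem_ideal_span_monomial_image.trans <| forall₂_congr fun u _ =>
    ⟨fun ⟨_, hv, hvu⟩ => hs hvu hv, fun hu => ⟨u, hu, le_rfl⟩⟩

lemma monomialExponents_monomialSpan (hs : IsUpperSet s) :
    monomialExponents (monomialSpan s : Ideal (PS K n)) = s := by
  classical
  ext u
  simp [monomialExponents, mem_monomialSpan hs, support_monomial]

lemma isHomog_monomialSpan (hs : IsUpperSet s) : IsHomog K n (monomialSpan s) := fun f hf d =>
  (mem_monomialSpan hs).2 fun u hu => (mem_monomialSpan hs).1 hf u (by
    rw [mem_support_iff, coeff_homogeneousComponent, ite_ne_right_iff] at hu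
    exact mem_support_iff.2 hu.2)

lemma hilb_monomialSpan (hs : IsUpperSet s) (d : ℕ) :
    hilb K n (monomialSpan s) d = (degreePart s d).card := by
  have h : leadingExponents (lexLt n) (monomialSpan s : Ideal (PS K n)) = s := by
    refine Set.Subset.antisymm ?_ ?_
    · rintro u ⟨f, hf, -, hu, -⟩
      exact (mem_monomialSpan hs).1 hf u (mem_support_iff.2 hu)
    · conv_lhs => rw [← monomialExponents_monomialSpan (K := K) hs]
      exact monomialExponents_subset_leadingExponents _ _
  rw [hilb_eq_card_degreePart_leadingExponents, h]

lemma isUpperSet_add (s : Set (Fin n →₀ ℕ)) {t : Set (Fin n →₀ ℕ)} (ht : IsUpperSet t) :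
    IsUpperSet (s + t) := by
  rintro _ v huv ⟨a, ha, b, hb, rfl⟩
  obtain ⟨w, rfl⟩ := exists_add_of_le huv
  exact ⟨a, ha, b + w, ht le_self_add hb, (add_assoc a b w).symm⟩

lemma monomialSpan_sup (s t : Set (Fin n →₀ ℕ)) :
    (monomialSpan s ⊔ monomialSpan t : Ideal (PS K n)) = monomialSpan (s ∪ t) := by
  rw [monomialSpan, monomialSpan, monomialSpan, Set.image_union, Ideal.span_union]

lemma monomialSpan_mul (s t : Set (Fin n →₀ ℕ)) :
    (monomialSpan s * monomialSpan t : Ideal (PS K n)) = monomialSpan (s + t) := by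
  rw [monomialSpan, monomialSpan, monomialSpan, Ideal.span_mul_span']
  congr 1
  ext f
  simp [Set.mem_mul, Set.mem_add, monomial_mul]

namespace IsMonomialIdeal

lemma eq_monomialSpan (hA : IsMonomialIdeal K n A) : A = monomialSpan (monomialExponents A) := by
  refine le_antisymm (fun f hf => ?_) (Ideal.span_le.2 ?_)
  · exact (mem_monomialSpan (isUpperSet_monomialExponents A)).2 (hA f hf)
  · rintro _ ⟨u, hu, rfl⟩
    exact hu

lemma isHomog (hA : IsMonomialIdeal K n A) : IsHomog K n A :=
  hA.eq_monomialSpan ▸ isHomog_monomialSpan (isUpperSet_monomialExponents A)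

lemma hilb_eq (hA : IsMonomialIdeal K n A) (d : ℕ) :
    hilb K n A d = (degreePart (monomialExponents A) d).card := by
  conv_lhs => rw [hA.eq_monomialSpan]
  exact hilb_monomialSpan (isUpperSet_monomialExponents A) d

lemma hilb_sup (hA : IsMonomialIdeal K n A) (hB : IsMonomialIdeal K n B) (d : ℕ) :
    hilb K n (A ⊔ B) d =
      (degreePart (monomialExponents A ∪ monomialExponents B) d).card := by
  conv_lhs => rw [hA.eq_monomialSpan, hB.eq_monomialSpan, monomialSpan_sup]
  exact hilb_monomialSpan
    ((isUpperSet_monomialExponents A).union (isUpperSet_monomialExponents B)) d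

lemma hilb_mul (hA : IsMonomialIdeal K n A) (hB : IsMonomialIdeal K n B) (d : ℕ) :
    hilb K n (A * B) d =
      (degreePart (monomialExponents A + monomialExponents B) d).card := by
  conv_lhs => rw [hA.eq_monomialSpan, hB.eq_monomialSpan, monomialSpan_mul]
  exact hilb_monomialSpan (isUpperSet_add _ (isUpperSet_monomialExponents B)) d

end IsMonomialIdeal

lemma IsLexIdeal.isLexClosed (hA : IsLexIdeal K n A) : IsLexClosed (monomialExponents A) :=
  fun u hu v huv h => hA.2 u v
    (by simpa only [expDeg, Finsupp.degree_eq_sum] using huv.symm) hu h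

lemma IsOplexIdeal.isOplexClosed (hA : IsOplexIdeal K n A) :
    IsOplexClosed (monomialExponents A) :=
  fun u hu v huv h => hA.2 u v
    (by simpa only [expDeg, Finsupp.degree_eq_sum] using huv.symm) hu h

lemma IsHomog.initialIdealO_eq (hA : IsHomog K n A) :
    initialIdealO K n (lexLt n) A = monomialSpan (leadingExponents (lexLt n) A) := by
  rw [initialIdealO, monomialSpan]
  congr 1
  ext p
  constructor
  · rintro ⟨f, hf, u, hu, hmax, rfl⟩
    refine ⟨u, ⟨homogeneousComponent u.degree f, hA f hf _,
      homogeneousComponent_isHomogeneous _ f, ?_, fun v hv => ?_⟩, rfl⟩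
    · simpa [coeff_homogeneousComponent] using hu
    · rw [coeff_homogeneousComponent, ite_ne_right_iff] at hv
      exact hmax v (mem_support_iff.2 hv.2)
  · rintro ⟨u, ⟨f, hf, -, hu, hmax⟩, rfl⟩
    exact ⟨f, hf, u, mem_support_iff.2 hu, fun v hv => hmax v (mem_support_iff.1 hv), rfl⟩

lemma IsHomog.isLexClosed_leadingExponents (hA : IsHomog K n A)
    (hlex : IsLexIdeal K n (initialIdealO K n (lexLt n) A)) :
    IsLexClosed (leadingExponents (lexLt n) A) := by
  have h := hlex.isLexClosed
  rwa [hA.initialIdealO_eq,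
    monomialExponents_monomialSpan (isUpperSet_leadingExponents_lexLt A)] at h

end MonomialIdeals

/-! ### Linear substitutions and general coordinate changes -/

section LinearSubstitution

variable {n : ℕ} {R S : Type*} [CommRing R] [CommRing S]

/-- The linear substitution `x_i ↦ ∑_j M_{ji} x_j`, with the index convention of `coordChange`. -/
def linearSubst (M : Matrix (Fin n) (Fin n) R) :
    MvPolynomial (Fin n) R →ₐ[R] MvPolynomial (Fin n) R :=
  aeval fun i => ∑ j, M j i • X j

lemma linearSubst_X (M : Matrix (Fin n) (Fin n) R) (i : Fin n) :
    linearSubst M (X i) = ∑ j, M j i • X j :=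
  aeval_X _ i

lemma linearSubst_mul (M N : Matrix (Fin n) (Fin n) R) :
    linearSubst (M * N) = (linearSubst M).comp (linearSubst N) := by
  refine algHom_ext fun i => ?_
  simp only [AlgHom.comp_apply, linearSubst_X, map_sum, map_smul, Finset.smul_sum, smul_smul,
    Matrix.mul_apply, Finset.sum_smul]
  rw [Finset.sum_comm]
  simp only [mul_comm]

lemma linearSubst_one : linearSubst (1 : Matrix (Fin n) (Fin n) R) = AlgHom.id R _ := by
  refine algHom_ext fun i => ?_
  simp [linearSubst_X, Matrix.one_apply]

lemma map_linearSubst (θ : R →+* S) (M : Matrix (Fin n) (Fin n) R)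
    (p : MvPolynomial (Fin n) R) :
    map θ (linearSubst M p) = linearSubst (M.map θ) (map θ p) := by
  simp only [linearSubst, aeval_eq_bind₁, map_bind₁, smul_eq_C_mul, map_sum, map_mul, map_C, map_X,
    Matrix.map_apply]

lemma isHomogeneous_linearSubst (M : Matrix (Fin n) (Fin n) R) {p : MvPolynomial (Fin n) R}
    {d : ℕ} (hp : p.IsHomogeneous d) : (linearSubst M p).IsHomogeneous d := by
  have h := hp.aeval (fun i => ∑ j, M j i • (X j : MvPolynomial (Fin n) R)) (n := 1) fun i =>
    .sum _ _ _ fun j _ => (homogeneousSubmodule (Fin n) R 1).smul_mem _ (isHomogeneous_X R j)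
  rwa [one_mul] at h

end LinearSubstitution

section CoordinateChanges

variable {K n}

lemma coordChange_eq_linearSubst (g : GL (Fin n) K) : coordChange K n g = linearSubst g.1 :=
  rfl

lemma coordChange_mul (g h : GL (Fin n) K) :
    coordChange K n (g * h) = (coordChange K n g).comp (coordChange K n h) :=
  linearSubst_mul g.1 h.1

lemma coordChange_one : coordChange K n 1 = AlgHom.id K _ :=
  linearSubst_one

/-- `coordChange` as an automorphism of the polynomial ring. -/
def coordChangeEquiv (g : GL (Fin n) K) : PS K n ≃ₐ[K] PS K n :=
  .ofAlgHom (coordChange K n g) (coordChange K n g⁻¹)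
    (by rw [← coordChange_mul, mul_inv_cancel, coordChange_one])
    (by rw [← coordChange_mul, inv_mul_cancel, coordChange_one])

lemma mem_map_coordChange {g : GL (Fin n) K} {J : Ideal (PS K n)} {f : PS K n} :
    f ∈ J.map (coordChange K n g) ↔ ∃ p ∈ J, coordChange K n g p = f :=
  Ideal.mem_map_iff_of_surjective _ (coordChangeEquiv g).surjective

lemma map_coordChange_mul (g h : GL (Fin n) K) (J : Ideal (PS K n)) :
    J.map (coordChange K n (g * h)) = (J.map (coordChange K n h)).map (coordChange K n g) := by
  rw [Ideal.map_mapₐ, coordChange_mul]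

lemma map_coordChange_one (J : Ideal (PS K n)) : J.map (coordChange K n 1) = J := by
  rw [coordChange_one]
  exact Ideal.map_id J

lemma IsHomog.map_coordChange {J : Ideal (PS K n)} (hJ : IsHomog K n J) (g : GL (Fin n) K) :
    IsHomog K n (J.map (coordChange K n g)) :=
  hJ.map fun _ _ => isHomogeneous_linearSubst g.1

lemma hilb_le_hilb_map_coordChange (g : GL (Fin n) K) (J : Ideal (PS K n)) (d : ℕ) :
    hilb K n J d ≤ hilb K n (J.map (coordChange K n g)) d := by
  have := finite_homogeneousPart (J.map (coordChange K n g)) d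
  refine (LinearEquiv.finrank_map_eq (coordChangeEquiv g).toLinearEquiv _).symm.trans_le
    (Submodule.finrank_mono ?_)
  rintro _ ⟨f, ⟨hf, hfd⟩, rfl⟩
  exact ⟨mem_map_coordChange.2 ⟨f, hf, rfl⟩, isHomogeneous_linearSubst g.1 hfd⟩

lemma hilb_map_coordChange (g : GL (Fin n) K) (J : Ideal (PS K n)) (d : ℕ) :
    hilb K n (J.map (coordChange K n g)) d = hilb K n J d := by
  refine le_antisymm ?_ (hilb_le_hilb_map_coordChange g J d)
  refine (hilb_le_hilb_map_coordChange g⁻¹ _ d).trans_eq ?_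
  rw [← map_coordChange_mul, inv_mul_cancel, map_coordChange_one]

/-- Evaluation at `g` of a polynomial in the entries of a matrix. -/
def evalEntries (g : GL (Fin n) K) : MvPolynomial (Fin n × Fin n) K →ₐ[K] K :=
  aeval fun p => g.1 p.1 p.2

variable {P Q : GL (Fin n) K → Prop}

namespace generally

lemma mono (hP : generally K n P) (hPQ : ∀ g, P g → Q g) : generally K n Q := by
  obtain ⟨F, hF, h⟩ := hP
  exact ⟨F, hF, fun g hg => hPQ g (h g hg)⟩

lemma ball {ι : Type*} {P : ι → GL (Fin n) K → Prop} {s : Set ι} (hs : s.Finite)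
    (hP : ∀ i ∈ s, generally K n (P i)) : generally K n fun g => ∀ i ∈ s, P i g := by
  choose! F hF h using hP
  refine ⟨∏ i ∈ hs.toFinset, F i, Finset.prod_ne_zero_iff.2 fun i hi => ?_, fun g hg i hi => ?_⟩
  · exact hF i (hs.mem_toFinset.1 hi)
  · rw [map_prod] at hg
    exact h i hi g (Finset.prod_ne_zero_iff.1 hg i (hs.mem_toFinset.2 hi))

lemma and (hP : generally K n P) (hQ : generally K n Q) :
    generally K n fun g => P g ∧ Q g := by
  obtain ⟨F, hF, h⟩ := hP
  obtain ⟨F', hF', h'⟩ := hQ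
  refine ⟨F * F', mul_ne_zero hF hF', fun g hg => ?_⟩
  rw [map_mul] at hg
  exact ⟨h g (left_ne_zero_of_mul hg), h' g (right_ne_zero_of_mul hg)⟩

lemma exists_GL [Infinite K] (hP : generally K n P) : ∃ g, P g := by
  obtain ⟨F, hF, h⟩ := hP
  obtain ⟨x, hx⟩ : ∃ x, eval x (F * (Matrix.mvPolynomialX (Fin n) (Fin n) K).det) ≠ 0 := by
    by_contra! hzero
    exact mul_ne_zero hF (Matrix.det_mvPolynomialX_ne_zero _ _)
      (MvPolynomial.funext fun x => (hzero x).trans (map_zero _).symm)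
  rw [map_mul, RingHom.map_det] at hx
  have hdet : (Matrix.of fun i j => x (i, j)).det ≠ 0 := by
    rw [← Matrix.mvPolynomialX_mapMatrix_eval (Matrix.of fun i j => x (i, j))]
    exact right_ne_zero_of_mul hx
  exact ⟨.mkOfDetNeZero _ hdet, h _ (left_ne_zero_of_mul hx)⟩

end generally

end CoordinateChanges

/-! ### Reversing the order of the variables -/

section Reversal

variable {K n} {u v : Fin n →₀ ℕ}

lemma oplexLt_mapDomain_rev (h : lexLt n u v) :
    oplexLt n (u.mapDomain Fin.rev) (v.mapDomain Fin.rev) := by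
  obtain ⟨i, heq, hlt⟩ := h
  have hrev (w : Fin n →₀ ℕ) (j : Fin n) : w.mapDomain Fin.rev j = w j.rev := by
    rw [← Finsupp.mapDomain_apply Fin.rev_injective w, Fin.rev_rev]
  refine ⟨i.rev, fun j hj => ?_, ?_⟩
  · rw [hrev, hrev]
    exact heq _ (Fin.rev_lt_iff.2 hj)
  · rwa [hrev, hrev, Fin.rev_rev]

lemma degree_mapDomain_rev (u : Fin n →₀ ℕ) : (u.mapDomain Fin.rev).degree = u.degree :=
  Finsupp.degree_mapDomain _ _

lemma IsLeadingExponent.rename_rev {p : PS K n} (h : IsLeadingExponent (lexLt n) p u) :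
    IsLeadingExponent (oplexLt n) (rename Fin.rev p) (u.mapDomain Fin.rev) := by
  refine ⟨by rw [coeff_rename_mapDomain _ Fin.rev_injective]; exact h.1, fun v hv => ?_⟩
  obtain ⟨w, rfl, hw⟩ := coeff_rename_ne_zero _ _ _ hv
  exact (h.2 w hw).imp (congrArg _) oplexLt_mapDomain_rev

lemma IsOplexClosed.preimage_mapDomain_rev {C : Set (Fin n →₀ ℕ)} (hC : IsOplexClosed C) :
    IsLexClosed (Finsupp.mapDomain Fin.rev ⁻¹' C) := fun u hu v huv h =>
  hC _ hu _ (by rw [degree_mapDomain_rev, degree_mapDomain_rev, huv]) (oplexLt_mapDomain_rev h)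

lemma card_degreePart_preimage_mapDomain_rev_le (C : Set (Fin n →₀ ℕ)) (d : ℕ) :
    (degreePart (Finsupp.mapDomain Fin.rev ⁻¹' C) d).card ≤ (degreePart C d).card := by
  refine Finset.card_le_card_of_injOn (Finsupp.mapDomain Fin.rev) (fun u hu => ?_)
    (Finsupp.mapDomain_injective Fin.rev_injective).injOn
  obtain ⟨hd, hu⟩ := mem_degreePart.1 hu
  exact mem_degreePart.2 ⟨(degree_mapDomain_rev u).trans hd, hu⟩

/-- The permutation matrix that reverses the order of the variables. -/
def reversalGL : GL (Fin n) K :=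
  Matrix.permMatrixHom.toHomUnits Fin.revPerm

lemma coordChange_reversalGL : coordChange K n reversalGL = rename Fin.rev := by
  refine algHom_ext fun i => ?_
  have hM (j : Fin n) : (reversalGL : GL (Fin n) K).1 j i = if j = i.rev then 1 else 0 := by
    change (Fin.revPerm⁻¹).permMatrix K j i = _
    simp [PEquiv.toMatrix_apply, Fin.rev_eq_iff]
  simp [coordChange_eq_linearSubst, linearSubst_X, hM]

lemma IsOplexClosed.subset_leadingExponents_oplexLt {C : Set (Fin n →₀ ℕ)}
    (hC : IsOplexClosed C) {A : Ideal (PS K n)}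
    (hA : IsLexClosed (leadingExponents (lexLt n) A))
    (hcard : ∀ d, (degreePart C d).card ≤ hilb K n A d) :
    C ⊆ leadingExponents (oplexLt n) (A.map (coordChange K n reversalGL)) := by
  intro u hu
  have hrev : (u.mapDomain Fin.rev).mapDomain Fin.rev = u := by
    rw [← Finsupp.mapDomain_comp, Fin.rev_involutive.comp_self, Finsupp.mapDomain_id]
  have hsub := hC.preimage_mapDomain_rev.subset_of_card_le hA fun d =>
    (card_degreePart_preimage_mapDomain_rev_le C d).trans
      ((hcard d).trans_eq (hilb_eq_card_degreePart_leadingExponents A d))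
  obtain ⟨f, hf, hfd, hlead⟩ := hsub (show (u.mapDomain Fin.rev).mapDomain Fin.rev ∈ C from
    hrev.symm ▸ hu)
  refine ⟨coordChange K n reversalGL f, Ideal.mem_map_of_mem _ hf,
    degree_mapDomain_rev u ▸ isHomogeneous_linearSubst _ hfd, ?_⟩
  rw [coordChange_reversalGL]
  exact hrev ▸ hlead.rename_rev

end Reversal

/-! ### Families of ideals depending polynomially on parameters -/

section Families

variable {K n} {ι R : Type*} [CommRing R] [Algebra K R] {θ : ι → R →ₐ[K] K}
  {𝓐 𝓑 : ι → Ideal (PS K n)} {d : ℕ}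

/-- The polynomials with coefficients in the parameter ring `R` whose specialization at every
parameter value `θ i` lies in `𝓐 i`. -/
def familyIdeal (θ : ι → R →ₐ[K] K) (𝓐 : ι → Ideal (PS K n)) : Ideal (MvPolynomial (Fin n) R) :=
  ⨅ i, (𝓐 i).comap (map (θ i : R →+* K))

lemma mem_familyIdeal {P : MvPolynomial (Fin n) R} :
    P ∈ familyIdeal θ 𝓐 ↔ ∀ i, map (θ i : R →+* K) P ∈ 𝓐 i :=
  Ideal.mem_iInf

lemma familyIdeal_sup_le : familyIdeal θ 𝓐 ⊔ familyIdeal θ 𝓑 ≤ familyIdeal θ (𝓐 ⊔ 𝓑) :=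
  sup_le (iInf_mono fun _ => Ideal.comap_mono le_sup_left)
    (iInf_mono fun _ => Ideal.comap_mono le_sup_right)

lemma familyIdeal_mul_le : familyIdeal θ 𝓐 * familyIdeal θ 𝓑 ≤ familyIdeal θ (𝓐 * 𝓑) :=
  Ideal.mul_le.2 fun P hP Q hQ => mem_familyIdeal.2 fun i => by
    rw [map_mul]
    exact Ideal.mul_mem_mul (mem_familyIdeal.1 hP i) (mem_familyIdeal.1 hQ i)

lemma map_map_algebraMap (φ : R →ₐ[K] K) (p : PS K n) :
    map (φ : R →+* K) (map (algebraMap K R) p) = p := by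
  rw [MvPolynomial.map_map, φ.comp_algebraMap, Algebra.algebraMap_self, MvPolynomial.map_id]

lemma map_algebraMap_mem_familyIdeal {I : Ideal (PS K n)} {p : PS K n} (hp : p ∈ I) :
    map (algebraMap K R) p ∈ familyIdeal θ fun _ => I :=
  mem_familyIdeal.2 fun i => by rwa [map_map_algebraMap]

lemma linearSubst_mem_familyIdeal {g : ι → GL (Fin n) K} {M : Matrix (Fin n) (Fin n) R}
    (hM : ∀ i, M.map (θ i) = (g i).1) {J : Ideal (PS K n)} {p : PS K n} (hp : p ∈ J) :
    linearSubst M (map (algebraMap K R) p) ∈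
      familyIdeal θ fun i => J.map (coordChange K n (g i)) := by
  refine mem_familyIdeal.2 fun i => mem_map_coordChange.2 ⟨p, hp, ?_⟩
  rw [map_linearSubst, map_map_algebraMap, coordChange_eq_linearSubst, RingHom.coe_coe, hM i]

lemma map_homogeneousComponent {S : Type*} [CommRing S] (φ : R →+* S) (d : ℕ)
    (P : MvPolynomial (Fin n) R) :
    map φ (homogeneousComponent d P) = homogeneousComponent d (map φ P) := by
  ext u
  simp only [coeff_map, coeff_homogeneousComponent, apply_ite φ, map_zero]

lemma exists_isHomogeneous_lift (h𝓐 : ∀ i, IsHomog K n (𝓐 i)) {φ : R →ₐ[K] K} {v : PS K n}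
    (hv : v ∈ (familyIdeal θ 𝓐).map (map (φ : R →+* K))) (hd : v.IsHomogeneous d) :
    ∃ P ∈ familyIdeal θ 𝓐, P.IsHomogeneous d ∧ map (φ : R →+* K) P = v := by
  obtain ⟨P, hP, rfl⟩ := (Ideal.mem_map_iff_of_surjective _
    fun p => ⟨_, map_map_algebraMap φ p⟩).1 hv
  refine ⟨homogeneousComponent d P, mem_familyIdeal.2 fun i => ?_,
    homogeneousComponent_isHomogeneous d P, ?_⟩
  · rw [map_homogeneousComponent]
    exact h𝓐 i _ (mem_familyIdeal.1 hP i) d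
  · rw [map_homogeneousComponent, homogeneousComponent_of_mem hd, if_pos rfl]

lemma exists_linearIndependent_lift (h𝓐 : ∀ i, IsHomog K n (𝓐 i)) {φ : R →ₐ[K] K}
    {κ : Type*} [Finite κ] {v : κ → PS K n}
    (hv : ∀ k, v k ∈ (familyIdeal θ 𝓐).map (map (φ : R →+* K)))
    (hd : ∀ k, (v k).IsHomogeneous d) {U : Set (Fin n →₀ ℕ)}
    (hli : LinearIndependent K fun k => coeffsOn U (v k)) :
    ∃ P : κ → MvPolynomial (Fin n) R, (∀ k, P k ∈ familyIdeal θ 𝓐) ∧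
      (∀ k, (P k).IsHomogeneous d) ∧ ∃ D : R, φ D ≠ 0 ∧
        ∀ {S : Type*} [CommRing S] [IsDomain S] (ψ : R →+* S), ψ D ≠ 0 →
          LinearIndependent S fun k => coeffsOn U (map ψ (P k)) := by
  choose P hP hPd hPv using fun k => exists_isHomogeneous_lift h𝓐 (hv k) (hd k)
  refine ⟨P, hP, hPd, ?_⟩
  simp only [← hPv] at hli
  exact exists_forall_linearIndependent_coeffsOn_map U (φ : R →+* K) hli

end Families

section GenericLeadingExponents

variable {K n} {𝓐 𝓑 : GL (Fin n) K → Ideal (PS K n)} {J : Ideal (PS K n)}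

/-- The family `𝓐` of homogeneous ideals is polynomial in the entries of `g`: every element of
every member is the value at `g` of a polynomial family of elements. -/
structure IsPolynomialFamily (𝓐 : GL (Fin n) K → Ideal (PS K n)) : Prop where
  isHomog (g : GL (Fin n) K) : IsHomog K n (𝓐 g)
  le_map (g : GL (Fin n) K) : 𝓐 g ≤
    (familyIdeal evalEntries 𝓐).map (map (evalEntries g : MvPolynomial (Fin n × Fin n) K →+* K))

namespace IsPolynomialFamily

lemma const (hJ : IsHomog K n J) : IsPolynomialFamily fun _ => J where
  isHomog _ := hJ
  le_map g p hp := map_map_algebraMap (evalEntries g) p ▸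
    Ideal.mem_map_of_mem _ (map_algebraMap_mem_familyIdeal hp)

lemma map_mvPolynomialX_evalEntries (g : GL (Fin n) K) :
    (Matrix.mvPolynomialX (Fin n) (Fin n) K).map (evalEntries g) = g.1 :=
  Matrix.mvPolynomialX_mapMatrix_aeval K g.1

lemma map_coordChange (hJ : IsHomog K n J) :
    IsPolynomialFamily fun g => J.map (coordChange K n g) where
  isHomog g := hJ.map_coordChange g
  le_map g := by
    refine Ideal.map_le_iff_le_comap.2 fun p hp => ?_
    have hlift := Ideal.mem_map_of_mem
      (map (evalEntries g : MvPolynomial (Fin n × Fin n) K →+* K))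
      (linearSubst_mem_familyIdeal map_mvPolynomialX_evalEntries hp)
    rwa [map_linearSubst, map_map_algebraMap, RingHom.coe_coe, map_mvPolynomialX_evalEntries]
      at hlift

lemma sup (h𝓐 : IsPolynomialFamily 𝓐) (h𝓑 : IsPolynomialFamily 𝓑) :
    IsPolynomialFamily (𝓐 ⊔ 𝓑) where
  isHomog g := (h𝓐.isHomog g).sup (h𝓑.isHomog g)
  le_map g := (sup_le_sup (h𝓐.le_map g) (h𝓑.le_map g)).trans
    ((Ideal.map_sup _ _ _).ge.trans (Ideal.map_mono familyIdeal_sup_le))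

lemma mul (h𝓐 : IsPolynomialFamily 𝓐) (h𝓑 : IsPolynomialFamily 𝓑) :
    IsPolynomialFamily (𝓐 * 𝓑) where
  isHomog g := (h𝓐.isHomog g).mul (h𝓑.isHomog g)
  le_map g := (Ideal.mul_mono (h𝓐.le_map g) (h𝓑.le_map g)).trans
    ((Ideal.map_mul _ _ _).ge.trans (Ideal.map_mono familyIdeal_mul_le))

end IsPolynomialFamily

/-- The leading exponents, for the lexicographic order, of the polynomial families of elements
of `𝓐`; these are the leading exponents of a general member of `𝓐`. -/
def genericLeadingExponents (𝓐 : GL (Fin n) K → Ideal (PS K n)) : Set (Fin n →₀ ℕ) :=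
  leadingExponents (lexLt n) (familyIdeal evalEntries 𝓐)

namespace IsPolynomialFamily

lemma card_le_card_degreePart (h𝓐 : IsPolynomialFamily 𝓐) {g : GL (Fin n) K} {d : ℕ}
    {κ : Type*} [Fintype κ] {v : κ → PS K n} (hv : ∀ k, v k ∈ 𝓐 g)
    (hd : ∀ k, (v k).IsHomogeneous d) {U : Set (Fin n →₀ ℕ)} (hU : IsLexClosed U)
    (hli : LinearIndependent K fun k => coeffsOn U (v k)) :
    Fintype.card κ ≤ (degreePart (U ∩ genericLeadingExponents 𝓐) d).card := by
  obtain ⟨P, hP, hPd, D, hD, hPli⟩ :=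
    exists_linearIndependent_lift h𝓐.isHomog (fun k => h𝓐.le_map g (hv k)) hd hli
  have hP_id := hPli (RingHom.id _) (ne_zero_of_map hD)
  simp only [MvPolynomial.map_id] at hP_id
  exact card_le_card_degreePart_leadingExponents hU hP hPd hP_id

lemma hilb_le_card_degreePart (h𝓐 : IsPolynomialFamily 𝓐) (g : GL (Fin n) K) (d : ℕ) :
    hilb K n (𝓐 g) d ≤ (degreePart (genericLeadingExponents 𝓐) d).card := by
  obtain ⟨v, hv, hvd, hli⟩ := exists_linearIndependent_coeffsOn_univ (𝓐 g) d
  simpa using h𝓐.card_le_card_degreePart hv hvd isLexClosed_univ hli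

end IsPolynomialFamily

lemma generally_mem_leadingExponents {u : Fin n →₀ ℕ} (hu : u ∈ genericLeadingExponents 𝓐) :
    generally K n fun g => u ∈ leadingExponents (lexLt n) (𝓐 g) := by
  obtain ⟨P, hP, hPd, hlead⟩ := hu
  refine ⟨coeff u P, hlead.1, fun g hg => ?_⟩
  let φ : MvPolynomial (Fin n × Fin n) K →+* K := evalEntries g
  refine ⟨map φ P, mem_familyIdeal.1 hP g, hPd.map φ, ?_, fun v hv => ?_⟩
  · rw [coeff_map]
    exact hg
  · rw [coeff_map] at hv
    exact hlead.2 v (ne_zero_of_map hv)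

-- Finitely many exponents generate the upper set `genericLeadingExponents 𝓐`.
lemma generally_genericLeadingExponents_subset (𝓐 : GL (Fin n) K → Ideal (PS K n)) :
    generally K n fun g => genericLeadingExponents 𝓐 ⊆ leadingExponents (lexLt n) (𝓐 g) := by
  set W := genericLeadingExponents 𝓐
  have hfin : {u | Minimal (· ∈ W) u}.Finite :=
    WellQuasiOrderedLE.finite_of_isAntichain (setOfPred_minimal_antichain _)
  refine (generally.ball hfin fun u hu => generally_mem_leadingExponents hu.1).mono
    fun g hg u hu => ?_
  obtain ⟨m, hmu, hm⟩ := (Set.isPWO_of_wellQuasiOrderedLE W).exists_le_minimal hu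
  exact isUpperSet_leadingExponents_lexLt _ hmu (hg m hm)

lemma IsPolynomialFamily.generally_forall_hilb_le (h𝓐 : IsPolynomialFamily 𝓐) :
    generally K n fun g => ∀ g₀ d, hilb K n (𝓐 g₀) d ≤ hilb K n (𝓐 g) d :=
  (generally_genericLeadingExponents_subset 𝓐).mono fun g hg g₀ d => by
    rw [hilb_eq_card_degreePart_leadingExponents (𝓐 g)]
    exact (h𝓐.hilb_le_card_degreePart g₀ d).trans (Finset.card_le_card (degreePart_mono hg d))

end GenericLeadingExponents

/-! ### Degenerations along one-parameter subgroups -/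

section Limits

variable {K n} {𝓐 𝓑 : Kˣ → Ideal (PS K n)} {d : ℕ}

/-- Evaluation at `s` of a polynomial in the degeneration parameter. -/
def evalParameter (s : K) : Polynomial K →ₐ[K] K :=
  Polynomial.aeval s

/-- Specialization at `s` of a one-parameter family of polynomials. -/
abbrev specialize (s : K) : MvPolynomial (Fin n) (Polynomial K) →+* PS K n :=
  map (evalParameter s : Polynomial K →+* K)

/-- The flat limit at `t = 0` of the family of ideals `𝓐 t`, `t ≠ 0`: the values at `0` of the
polynomial families of elements of `𝓐 t`. -/
def limitIdeal (𝓐 : Kˣ → Ideal (PS K n)) : Ideal (PS K n) :=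
  (familyIdeal (fun t : Kˣ => evalParameter (t : K)) 𝓐).map (specialize 0)

lemma limitIdeal_sup_le : limitIdeal 𝓐 ⊔ limitIdeal 𝓑 ≤ limitIdeal (𝓐 ⊔ 𝓑) :=
  (Ideal.map_sup _ _ _).ge.trans (Ideal.map_mono familyIdeal_sup_le)

lemma limitIdeal_mul_le : limitIdeal 𝓐 * limitIdeal 𝓑 ≤ limitIdeal (𝓐 * 𝓑) :=
  (Ideal.map_mul _ _ _).ge.trans (Ideal.map_mono familyIdeal_mul_le)

lemma map_coordChange_limitIdeal_le (h : GL (Fin n) K) :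
    (limitIdeal 𝓐).map (coordChange K n h) ≤
      limitIdeal fun t => (𝓐 t).map (coordChange K n h) := by
  have hmap (s : K) (P : MvPolynomial (Fin n) (Polynomial K)) :
      specialize s (linearSubst (h.1.map (algebraMap K (Polynomial K))) P) =
        coordChange K n h (specialize s P) := by
    rw [map_linearSubst, coordChange_eq_linearSubst]
    congr 2
    ext i j
    exact (evalParameter s).commutes _
  refine Ideal.map_le_iff_le_comap.2 (Ideal.map_le_iff_le_comap.2 fun P hP => ?_)
  rw [Ideal.mem_comap, Ideal.mem_comap, ← hmap]
  refine Ideal.mem_map_of_mem _ (mem_familyIdeal.2 fun t => ?_)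
  rw [hmap]
  exact Ideal.mem_map_of_mem _ (mem_familyIdeal.1 hP t)

lemma exists_linearIndependent_of_mem_limitIdeal [Infinite K] (h𝓐 : ∀ t, IsHomog K n (𝓐 t))
    {κ : Type*} [Finite κ] {v : κ → PS K n} (hv : ∀ k, v k ∈ limitIdeal 𝓐)
    (hd : ∀ k, (v k).IsHomogeneous d) {U : Set (Fin n →₀ ℕ)}
    (hli : LinearIndependent K fun k => coeffsOn U (v k)) :
    ∃ t, ∃ v' : κ → PS K n, (∀ k, v' k ∈ 𝓐 t) ∧ (∀ k, (v' k).IsHomogeneous d) ∧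
      LinearIndependent K fun k => coeffsOn U (v' k) := by
  obtain ⟨P, hP, hPd, D, hD, hPli⟩ := exists_linearIndependent_lift h𝓐 hv hd hli
  obtain ⟨t, ht⟩ : ∃ t, (D * Polynomial.X).eval t ≠ 0 := by
    by_contra! hzero
    exact mul_ne_zero (ne_zero_of_map hD) Polynomial.X_ne_zero
      (Polynomial.funext fun t => (hzero t).trans Polynomial.eval_zero.symm)
  rw [Polynomial.eval_mul, Polynomial.eval_X] at ht
  refine ⟨Units.mk0 t (right_ne_zero_of_mul ht), fun k => specialize t (P k),
    fun k => mem_familyIdeal.1 (hP k) _, fun k => (hPd k).map _, hPli _ ?_⟩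
  rw [RingHom.coe_coe, evalParameter, Polynomial.coe_aeval_eq_eval]
  exact left_ne_zero_of_mul ht

lemma exists_hilb_limitIdeal_le [Infinite K] (h𝓐 : ∀ t, IsHomog K n (𝓐 t)) (d : ℕ) :
    ∃ t, hilb K n (limitIdeal 𝓐) d ≤ hilb K n (𝓐 t) d := by
  obtain ⟨v, hv, hvd, hli⟩ := exists_linearIndependent_coeffsOn_univ (limitIdeal 𝓐) d
  obtain ⟨t, v', hv', hvd', hli'⟩ := exists_linearIndependent_of_mem_limitIdeal h𝓐 hv hvd hli
  exact ⟨t, by simpa using card_le_hilb hv' hvd' hli'⟩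

end Limits

section Weights

variable {n} {u v : Fin n →₀ ℕ} {d : ℕ}

lemma weight_lt_weight {w : Fin n → ℕ} {i : Fin n} (hv : v.degree ≤ d) (hwi : 0 < w i)
    (hw : ∀ j, v j ≠ u j → j ≠ i → (d + 1) * w j ≤ w i) (hi : v i < u i) :
    Finsupp.weight w v < Finsupp.weight w u := by
  have hterm (j : Fin n) : (d + 1) * (v j * w j) + (if j = i then (d + 1) * w i else 0) ≤
      (d + 1) * (u j * w j) + w i * v j := by
    by_cases hj : j = i
    · subst hj
      rw [if_pos rfl]
      nlinarith [Nat.mul_le_mul_left ((d + 1) * w j) hi, Nat.zero_le (w j * v j)]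
    · rw [if_neg hj]
      by_cases huv : v j = u j
      · rw [huv]
        exact Nat.le_add_right _ _
      · nlinarith [Nat.mul_le_mul_right (v j) (hw j huv hj), Nat.zero_le ((d + 1) * (u j * w j))]
  have hsum := Finset.sum_le_sum fun j (_ : j ∈ Finset.univ) => hterm j
  simp only [Finset.sum_add_distrib, ← Finset.mul_sum, Finset.sum_ite_eq', Finset.mem_univ,
    if_true, ← Finsupp.degree_eq_sum] at hsum
  simp only [Finsupp.weight_eq_sum, smul_eq_mul]
  nlinarith [Nat.mul_le_mul_left (w i) hv]

/-- Weights that compare exponents of degree at most `d` lexicographically. -/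
def lexWeight (d : ℕ) (i : Fin n) : ℕ :=
  (d + 1) ^ (n - i)

/-- Weights that compare exponents of degree at most `d` opposite lexicographically. -/
def oplexWeight (d : ℕ) (i : Fin n) : ℕ :=
  (d + 1) ^ (i : ℕ)

lemma weight_lexWeight_lt (hv : v.degree ≤ d) (h : lexLt n v u) :
    Finsupp.weight (lexWeight d) v < Finsupp.weight (lexWeight d) u := by
  obtain ⟨i, heq, hlt⟩ := h
  refine weight_lt_weight hv (Nat.pow_pos d.succ_pos) (fun j hne hji => ?_) hlt
  have hij : i < j := (not_lt.1 fun hj => hne (heq j hj)).lt_of_ne' hji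
  rw [lexWeight, lexWeight, ← pow_succ']
  exact Nat.pow_le_pow_right d.succ_pos (by lia)

lemma weight_oplexWeight_lt (hv : v.degree ≤ d) (h : oplexLt n v u) :
    Finsupp.weight (oplexWeight d) v < Finsupp.weight (oplexWeight d) u := by
  obtain ⟨i, heq, hlt⟩ := h
  refine weight_lt_weight hv (Nat.pow_pos d.succ_pos) (fun j hne hji => ?_) hlt
  have hij : j < i := (not_lt.1 fun hj => hne (heq j hj)).lt_of_ne hji
  rw [oplexWeight, oplexWeight, ← pow_succ']
  exact Nat.pow_le_pow_right d.succ_pos (by lia)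

end Weights

section Torus

variable {K n} {w : Fin n → ℕ} {u : Fin n →₀ ℕ}

lemma linearSubst_diagonal_monomial {R : Type*} [CommRing R] (δ : Fin n → R) (v : Fin n →₀ ℕ)
    (a : R) :
    linearSubst (Matrix.diagonal δ) (monomial v a) = monomial v (a * ∏ i, δ i ^ v i) := by
  have hX (i : Fin n) : ∑ j, Matrix.diagonal δ j i • (X j : MvPolynomial (Fin n) R) =
      δ i • X i := by
    rw [Finset.sum_eq_single i (fun j _ hj => by rw [Matrix.diagonal_apply_ne _ hj, zero_smul])
      (by simp), Matrix.diagonal_apply_eq]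
  simp only [linearSubst, aeval_monomial, hX]
  rw [monomial_eq, algebraMap_eq, C_mul, mul_assoc,
    Finsupp.prod_fintype _ _ (by simp), Finsupp.prod_fintype _ _ (by simp), map_prod,
    ← Finset.prod_mul_distrib]
  simp only [smul_eq_C_mul, mul_pow, map_pow]

/-- The one-parameter subgroup `x_i ↦ t⁻¹ ^ w_i x_i` of the diagonal torus. -/
def weightTorus (w : Fin n → ℕ) (t : Kˣ) : GL (Fin n) K :=
  Units.map (Matrix.diagonalRingHom (Fin n) K).toMonoidHom
    (MulEquiv.piUnits.symm fun i => t⁻¹ ^ w i)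

lemma coordChange_weightTorus_monomial (t : Kˣ) (v : Fin n →₀ ℕ) (a : K) :
    coordChange K n (weightTorus w t) (monomial v a) =
      monomial v (a * (t : K)⁻¹ ^ Finsupp.weight w v) := by
  have hM : (weightTorus w t).1 = Matrix.diagonal fun i => (t : K)⁻¹ ^ w i := by
    simp [weightTorus]
  simp only [coordChange_eq_linearSubst, hM, linearSubst_diagonal_monomial,
    Finsupp.weight_eq_sum, smul_eq_mul, ← pow_mul, mul_comm (w _), Finset.prod_pow_eq_pow_sum]

/-- The polynomial `∑ c_v t ^ (wt u - wt v) x ^ v` in `x` and `t` that interpolates between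
`f = ∑ c_v x ^ v` and its part of weight `wt u`. -/
def degeneration (w : Fin n → ℕ) (u : Fin n →₀ ℕ) (f : PS K n) :
    MvPolynomial (Fin n) (Polynomial K) :=
  ∑ v ∈ f.support, monomial v
    (Polynomial.C (coeff v f) * Polynomial.X ^ (Finsupp.weight w u - Finsupp.weight w v))

lemma specialize_degeneration {f : PS K n} (s : K) :
    specialize s (degeneration w u f) = ∑ v ∈ f.support,
      monomial v (coeff v f * s ^ (Finsupp.weight w u - Finsupp.weight w v)) := by
  simp [degeneration, evalParameter]

lemma specialize_zero_degeneration {f : PS K n}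
    (hf : IsLeadingExponent (fun a b => Finsupp.weight w a < Finsupp.weight w b) f u) :
    specialize 0 (degeneration w u f) = monomial u (coeff u f) := by
  rw [specialize_degeneration, Finset.sum_eq_single u (fun v hv hvu => ?_) (by simp)]
  · rw [Nat.sub_self, pow_zero, mul_one]
  · have hlt := (hf.2 v (mem_support_iff.1 hv)).resolve_left hvu
    rw [zero_pow (Nat.sub_pos_of_lt hlt).ne', mul_zero, monomial_zero]

lemma specialize_unit_degeneration {f : PS K n}
    (hf : IsLeadingExponent (fun a b => Finsupp.weight w a < Finsupp.weight w b) f u) (t : Kˣ) :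
    specialize (t : K) (degeneration w u f) =
      C ((t : K) ^ Finsupp.weight w u) * coordChange K n (weightTorus w t) f := by
  conv_rhs => rw [f.as_sum]
  rw [specialize_degeneration, map_sum, Finset.mul_sum]
  refine Finset.sum_congr rfl fun v hv => ?_
  have hle : Finsupp.weight w v ≤ Finsupp.weight w u :=
    (hf.2 v (mem_support_iff.1 hv)).elim (fun h => h ▸ le_rfl) le_of_lt
  rw [coordChange_weightTorus_monomial, C_mul_monomial, pow_sub₀ _ t.ne_zero hle, inv_pow,
    mul_left_comm]

lemma mem_monomialExponents_limitIdeal {r : (Fin n →₀ ℕ) → (Fin n →₀ ℕ) → Prop}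
    {A : Ideal (PS K n)}
    (hw : ∀ v, v.degree = u.degree → r v u → Finsupp.weight w v < Finsupp.weight w u)
    (hu : u ∈ leadingExponents r A) :
    u ∈ monomialExponents (limitIdeal fun t => A.map (coordChange K n (weightTorus w t))) := by
  obtain ⟨f, hf, hfd, hne, hlead⟩ := hu
  have hlead' : IsLeadingExponent (fun a b => Finsupp.weight w a < Finsupp.weight w b) f u :=
    ⟨hne, fun v hv => (hlead v hv).imp_right (hw v (not_imp_comm.1 hfd.coeff_eq_zero hv))⟩
  have hlimit : monomial u (coeff u f) ∈
      limitIdeal fun t => A.map (coordChange K n (weightTorus w t)) := by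
    rw [← specialize_zero_degeneration hlead']
    refine Ideal.mem_map_of_mem _ (mem_familyIdeal.2 fun t => ?_)
    rw [specialize_unit_degeneration hlead' t]
    exact Ideal.mul_mem_left _ _ (Ideal.mem_map_of_mem _ hf)
  have hmul := Ideal.mul_mem_left _ (C (coeff u f)⁻¹) hlimit
  rwa [C_mul_monomial, inv_mul_cancel₀ hne] at hmul

lemma exists_forall_mem_monomialExponents_limitIdeal {I : Ideal (PS K n)} {d : ℕ}
    {r : (Fin n →₀ ℕ) → (Fin n →₀ ℕ) → Prop} {g : GL (Fin n) K} {E : Set (Fin n →₀ ℕ)}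
    (hw : ∀ u v, v.degree ≤ d → r v u → Finsupp.weight w v < Finsupp.weight w u)
    (hE : E ⊆ leadingExponents r (I.map (coordChange K n g))) :
    ∃ a : Kˣ → GL (Fin n) K, ∀ u ∈ E, u.degree ≤ d →
      u ∈ monomialExponents (limitIdeal fun t => I.map (coordChange K n (a t))) := by
  refine ⟨fun t => weightTorus w t * g, fun u hu hud => ?_⟩
  simp only [map_coordChange_mul]
  exact mem_monomialExponents_limitIdeal (fun v hv => hw u v (hv.trans_le hud)) (hE hu)

end Torus

/-! ### Generic leading exponents are closed under exchange -/

section Transvections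

variable {n} {R : Type*} [CommRing R] {i j : Fin n}

lemma linearSubst_transvection_X (k : Fin n) :
    linearSubst (Matrix.transvection i j (1 : R)) (X k) = if k = j then X i + X j else X k := by
  have hterm (l : Fin n) : Matrix.transvection i j (1 : R) l k • (X l : MvPolynomial (Fin n) R) =
      (if l = k then X l else 0) + if l = i then (if k = j then X l else 0) else 0 := by
    simp only [Matrix.transvection, Matrix.add_apply, Matrix.one_apply, Matrix.single_apply,
      add_smul, ite_smul, one_smul, zero_smul, ite_and, eq_comm]
  simp only [linearSubst_X, hterm, Finset.sum_add_distrib, Finset.sum_ite_eq', Finset.mem_univ,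
    if_true]
  split_ifs with hk
  · rw [hk, add_comm]
  · exact add_zero _

lemma linearSubst_transvection_monomial (w : Fin n →₀ ℕ) :
    linearSubst (Matrix.transvection i j (1 : R)) (monomial w 1) =
      ∑ l ∈ Finset.range (w j + 1),
        monomial (w.erase j + Finsupp.single i l + Finsupp.single j (w j - l))
          ((w j).choose l : R) := by
  have herase : linearSubst (Matrix.transvection i j (1 : R)) (monomial (w.erase j) 1) =
      monomial (w.erase j) 1 := by
    rw [monomial_eq, C_1, one_mul, Finsupp.prod, map_prod]
    refine Finset.prod_congr rfl fun k hk => ?_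
    rw [Finsupp.support_erase] at hk
    rw [map_pow, linearSubst_transvection_X, if_neg (Finset.ne_of_mem_erase hk)]
  have hsplit : monomial w (1 : R) = monomial (w.erase j) 1 * X j ^ w j := by
    rw [X_pow_eq_monomial, monomial_mul, one_mul, Finsupp.erase_add_single]
  rw [hsplit, map_mul, herase, map_pow, linearSubst_transvection_X, if_pos rfl, add_pow,
    Finset.mul_sum]
  refine Finset.sum_congr rfl fun l _ => ?_
  rw [X_pow_eq_monomial, X_pow_eq_monomial, ← map_natCast C, monomial_mul, mul_comm _ (C _),
    C_mul_monomial, monomial_mul, add_assoc]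
  simp only [mul_one, one_mul]

lemma coeff_linearSubst_transvection_monomial (hij : i ≠ j) (w : Fin n →₀ ℕ) {l : ℕ}
    (hl : l ≤ w j) :
    coeff (w.erase j + Finsupp.single i l + Finsupp.single j (w j - l))
      (linearSubst (Matrix.transvection i j (1 : R)) (monomial w 1)) = (w j).choose l := by
  rw [linearSubst_transvection_monomial, coeff_sum,
    Finset.sum_eq_single_of_mem l (Finset.mem_range_succ_iff.2 hl), coeff_monomial, if_pos rfl]
  refine fun k _ hkl => (coeff_monomial _ _ _).trans (if_neg fun h => hkl ?_)
  simpa [hij, hij.symm] using DFunLike.congr_fun h i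

lemma coeff_linearSubst_transvection_self (hij : i ≠ j) (w : Fin n →₀ ℕ) :
    coeff w (linearSubst (Matrix.transvection i j (1 : R)) (monomial w 1)) = 1 := by
  have h := coeff_linearSubst_transvection_monomial (R := R) hij w (Nat.zero_le _)
  rwa [Finsupp.single_zero, add_zero, Nat.sub_zero, Finsupp.erase_add_single, Nat.choose_zero_right,
    Nat.cast_one] at h

lemma coeff_linearSubst_transvection_exchange (hij : i ≠ j) (v : Fin n →₀ ℕ) :
    coeff (v + Finsupp.single i 1) (linearSubst (Matrix.transvection i j (1 : R))
      (monomial (v + Finsupp.single j 1) 1)) = ((v j + 1 : ℕ) : R) := by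
  have hvj : (v + Finsupp.single j 1 : Fin n →₀ ℕ) j = v j + 1 := by simp
  have h := coeff_linearSubst_transvection_monomial (R := R) hij (v + Finsupp.single j 1)
    (l := 1) (by simp)
  rwa [hvj, Nat.add_sub_cancel, Finsupp.erase_add, Finsupp.erase_single, add_zero, add_right_comm,
    Finsupp.erase_add_single, Nat.choose_one_right] at h

lemma eq_or_lexLt_of_coeff_linearSubst_transvection_ne_zero (hij : i < j) {w x : Fin n →₀ ℕ}
    (hx : coeff x (linearSubst (Matrix.transvection i j (1 : R)) (monomial w 1)) ≠ 0) :
    x = w ∨ lexLt n w x := by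
  rw [linearSubst_transvection_monomial, coeff_sum] at hx
  obtain ⟨l, -, hl⟩ := Finset.exists_ne_zero_of_sum_ne_zero hx
  rw [coeff_monomial] at hl
  obtain ⟨rfl, -⟩ := ite_ne_right_iff.1 hl
  rcases l.eq_zero_or_pos with rfl | hpos
  · left
    rw [Finsupp.single_zero, add_zero, Nat.sub_zero, Finsupp.erase_add_single]
  · refine .inr ⟨i, fun k hk => ?_, ?_⟩
    · simp [hk.ne, (hk.trans hij).ne]
    · simpa [hij.ne] using hpos

/-- The substitution `x_j ↦ x_i + x_j` as an element of the general linear group. -/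
def transvectionGL (hij : i ≠ j) : GL (Fin n) K :=
  .mkOfDetNeZero (Matrix.transvection i j 1)
    ((Matrix.det_transvection_of_ne i j hij 1).trans_ne one_ne_zero)

end Transvections

section Gin

variable {K n} {I : Ideal (PS K n)}

/-- The exponents of the generic initial ideal of `I` for the lexicographic order. -/
def ginExponents (I : Ideal (PS K n)) : Set (Fin n →₀ ℕ) :=
  genericLeadingExponents fun g => I.map (coordChange K n g)

lemma hilb_le_card_degreePart_ginExponents (hI : IsHomog K n I) (d : ℕ) :
    hilb K n I d ≤ (degreePart (ginExponents I) d).card := by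
  have h := (IsPolynomialFamily.map_coordChange hI).hilb_le_card_degreePart 1 d
  rwa [map_coordChange_one] at h

lemma exists_forall_ginExponents_mem_limitIdeal [Infinite K] (I : Ideal (PS K n)) (d : ℕ) :
    ∃ a : Kˣ → GL (Fin n) K, ∀ u ∈ ginExponents I, u.degree ≤ d →
      u ∈ monomialExponents (limitIdeal fun t => I.map (coordChange K n (a t))) := by
  obtain ⟨g, hg⟩ := (generally_genericLeadingExponents_subset
    fun g => I.map (coordChange K n g)).exists_GL
  exact exists_forall_mem_monomialExponents_limitIdeal
    (fun _ _ => weight_lexWeight_lt) hg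

lemma card_le_card_degreePart_ginExponents [Infinite K] (hI : IsHomog K n I)
    {a : Kˣ → GL (Fin n) K} {h : GL (Fin n) K} {d : ℕ} {κ : Type*} [Fintype κ] {v : κ → PS K n}
    (hv : ∀ k, v k ∈ limitIdeal fun t => I.map (coordChange K n (a t)))
    (hd : ∀ k, (v k).IsHomogeneous d) {U : Set (Fin n →₀ ℕ)} (hU : IsLexClosed U)
    (hli : LinearIndependent K fun k => coeffsOn U (coordChange K n h (v k))) :
    Fintype.card κ ≤ (degreePart (U ∩ ginExponents I) d).card := by
  obtain ⟨t, v', hv', hvd', hli'⟩ := exists_linearIndependent_of_mem_limitIdeal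
    (fun t => (hI.map_coordChange (a t)).map_coordChange h)
    (fun k => map_coordChange_limitIdeal_le h (Ideal.mem_map_of_mem _ (hv k)))
    (fun k => isHomogeneous_linearSubst h.1 (hd k)) hli
  simp only [← map_coordChange_mul] at hv'
  exact (IsPolynomialFamily.map_coordChange hI).card_le_card_degreePart hv' hvd' hU hli'

-- The transvection lets `u = v + e_j` contribute `v + e_i`, and does not move the other exponents.
lemma linearIndependent_coeffsOn_transvection [CharZero K] {i j : Fin n} (hij : i < j)
    {v : Fin n →₀ ℕ} {U Z : Set (Fin n →₀ ℕ)} (hU : v + Finsupp.single i 1 ∈ U)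
    (hZ : v + Finsupp.single i 1 ∉ Z) (hZU : ∀ z ∈ Z, z ≠ v + Finsupp.single j 1 → z ∈ U)
    (hmin : ∀ x ∈ U, toLex (v + Finsupp.single i 1) ≤ toLex x) :
    LinearIndependent K fun z : Z =>
      coeffsOn U (coordChange K n (transvectionGL K hij.ne) (monomial z.1 1)) := by
  classical
  set m := v + Finsupp.single i 1
  set u := v + Finsupp.single j 1
  have hτU (z : Z) : (if z.1 = u then m else z.1) ∈ U := by
    split_ifs with hz
    exacts [hU, hZU z z.2 hz]
  refine linearIndependent_of_triangular (τ := fun z => ⟨_, hτU z⟩) (fun z z' hzz => ?_)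
    (fun x : U => OrderDual.toDual (toLex x.1)) (fun z => ?_) fun z x hx => ?_
  · have hm (z : Z) : z.1 ≠ m := fun h => hZ (h ▸ z.2)
    have heq := Subtype.ext_iff.1 hzz
    dsimp only at heq
    split_ifs at heq with h h'
    exacts [Subtype.ext (h.trans h'.symm), (hm z' heq.symm).elim, (hm z heq).elim,
      Subtype.ext heq]
  · rw [coeffsOn_apply]
    dsimp only
    split_ifs with hz
    · rw [hz]
      exact (coeff_linearSubst_transvection_exchange hij.ne v).trans_ne
        (Nat.cast_ne_zero.2 (Nat.succ_ne_zero _))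
    · exact (coeff_linearSubst_transvection_self hij.ne z.1).trans_ne one_ne_zero
  · rw [Subtype.ext_iff]
    dsimp only
    split_ifs with hz
    · exact (hmin x x.2).eq_or_lt.imp_left fun h => toLex.injective h.symm
    · exact eq_or_lexLt_of_coeff_linearSubst_transvection_ne_zero hij hx

lemma isExchangeClosed_ginExponents [CharZero K] (hI : IsHomog K n I) :
    IsExchangeClosed (ginExponents I) := by
  classical
  intro v i j hij hu
  by_contra hm
  set m := v + Finsupp.single i 1
  set u := v + Finsupp.single j 1
  let U : Set (Fin n →₀ ℕ) := {x | toLex m ≤ toLex x}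
  have hU : IsLexClosed U := fun x (hx : toLex m ≤ toLex x) y _ (hxy : toLex x < toLex y) =>
    hx.trans hxy.le
  have huU : u ∉ U := fun h : toLex m ≤ toLex u => h.not_gt (lexLt_add_single_of_lt v hij)
  let Y := degreePart (U ∩ ginExponents I) u.degree
  have hZ (z : Fin n →₀ ℕ) (hz : z ∈ insert u Y) :
      z.degree = u.degree ∧ z ∈ ginExponents I ∧ (z ≠ u → z ∈ U) := by
    rcases Finset.mem_insert.1 hz with rfl | hz
    · exact ⟨rfl, hu, fun h => (h rfl).elim⟩
    · obtain ⟨hd, hzU, hzI⟩ := mem_degreePart.1 hz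
      exact ⟨hd, hzI, fun _ => hzU⟩
  obtain ⟨a, ha⟩ := exists_forall_ginExponents_mem_limitIdeal I u.degree
  have hcard := card_le_card_degreePart_ginExponents hI
    (fun z : ((insert u Y : Finset _) : Set (Fin n →₀ ℕ)) => ha z (hZ z z.2).2.1 (hZ z z.2).1.le)
    (fun z => isHomogeneous_monomial 1 (hZ z z.2).1) hU
    (linearIndependent_coeffsOn_transvection hij (le_refl (toLex m)) (fun h => hm (hZ m h).2.1)
      (fun z hz => (hZ z hz).2.2) fun _ => id)
  have huY : u ∉ Y := fun h => huU (mem_degreePart.1 h).2.1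
  simp [Y, huY] at hcard

end Gin

/-! ### The two Hilbert function inequalities -/

section Inequalities

variable {K n} {I J Ilex Jop : Ideal (PS K n)} {g : GL (Fin n) K}

open Pointwise

lemma exists_hilb_limitIdeal_sup_le [Infinite K] (hI : IsHomog K n I) (hJ : IsHomog K n J)
    (a b : Kˣ → GL (Fin n) K) (d : ℕ) :
    ∃ g, hilb K n ((limitIdeal fun t => I.map (coordChange K n (a t))) ⊔
      limitIdeal fun t => J.map (coordChange K n (b t))) d ≤
        hilb K n (I ⊔ J.map (coordChange K n g)) d := by
  obtain ⟨t, ht⟩ := exists_hilb_limitIdeal_le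
    (fun t => (hI.map_coordChange (a t)).sup (hJ.map_coordChange (b t))) d
  refine ⟨(a t)⁻¹ * b t, (hilb_mono limitIdeal_sup_le d).trans (ht.trans_eq ?_)⟩
  rw [← hilb_map_coordChange (a t) (I ⊔ _), Ideal.map_sup, ← map_coordChange_mul,
    mul_inv_cancel_left]

lemma exists_hilb_limitIdeal_mul_le [Infinite K] (hI : IsHomog K n I) (hJ : IsHomog K n J)
    (a b : Kˣ → GL (Fin n) K) (d : ℕ) :
    ∃ g, hilb K n ((limitIdeal fun t => I.map (coordChange K n (a t))) *
      limitIdeal fun t => J.map (coordChange K n (b t))) d ≤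
        hilb K n (I * J.map (coordChange K n g)) d := by
  obtain ⟨t, ht⟩ := exists_hilb_limitIdeal_le
    (fun t => (hI.map_coordChange (a t)).mul (hJ.map_coordChange (b t))) d
  refine ⟨(a t)⁻¹ * b t, (hilb_mono limitIdeal_mul_le d).trans (ht.trans_eq ?_)⟩
  rw [← hilb_map_coordChange (a t) (I * _), Ideal.map_mul, ← map_coordChange_mul,
    mul_inv_cancel_left]

lemma card_degreePart_monomialExponents_le_ginExponents (hI : IsHomog K n I)
    (hIlex : IsLexIdeal K n Ilex) (hhilb : ∀ d, hilb K n Ilex d = hilb K n I d) (d : ℕ) :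
    (degreePart (monomialExponents Ilex) d).card ≤ (degreePart (ginExponents I) d).card :=
  ((hIlex.1.hilb_eq d).symm.trans (hhilb d)).trans_le (hilb_le_card_degreePart_ginExponents hI d)

lemma exists_hilb_sup_le [CharZero K] (hI : IsHomog K n I) (hJ : IsHomog K n J)
    (hIlex : IsLexIdeal K n Ilex) (hhilb : ∀ d, hilb K n Ilex d = hilb K n I d)
    (hJop : IsOplexIdeal K n Jop)
    (hg : monomialExponents Jop ⊆ leadingExponents (oplexLt n) (J.map (coordChange K n g)))
    (d : ℕ) :
    ∃ g, hilb K n (Ilex ⊔ Jop) d ≤ hilb K n (I ⊔ J.map (coordChange K n g)) d := by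
  obtain ⟨a, ha⟩ := exists_forall_ginExponents_mem_limitIdeal I d
  obtain ⟨b, hb⟩ := exists_forall_mem_monomialExponents_limitIdeal
    (fun _ _ => weight_oplexWeight_lt) hg (d := d)
  obtain ⟨g, hg⟩ := exists_hilb_limitIdeal_sup_le hI hJ a b d
  refine ⟨g, le_trans ?_ hg⟩
  set A := limitIdeal fun t => I.map (coordChange K n (a t))
  set B := limitIdeal fun t => J.map (coordChange K n (b t))
  have hsub : degreePart (ginExponents I ∪ monomialExponents Jop) d ⊆
      degreePart (monomialExponents (A ⊔ B)) d := fun u hu => by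
    obtain ⟨hud, hu⟩ := mem_degreePart.1 hu
    refine mem_degreePart.2 ⟨hud, hu.elim (fun h => ?_) fun h => ?_⟩
    · exact monomialExponents_mono le_sup_left (ha u h hud.le)
    · exact monomialExponents_mono le_sup_right (hb u h hud.le)
  calc hilb K n (Ilex ⊔ Jop) d
      = (degreePart (monomialExponents Ilex ∪ monomialExponents Jop) d).card :=
        hIlex.1.hilb_sup hJop.1 d
    _ ≤ (degreePart (ginExponents I ∪ monomialExponents Jop) d).card :=
        card_degreePart_union_le (isExchangeClosed_ginExponents hI) hIlex.isLexClosed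
          hJop.isOplexClosed (card_degreePart_monomialExponents_le_ginExponents hI hIlex hhilb d)
    _ ≤ (degreePart (monomialExponents (A ⊔ B)) d).card := Finset.card_le_card hsub
    _ ≤ hilb K n (A ⊔ B) d := card_degreePart_monomialExponents_le_hilb _ d

lemma exists_hilb_mul_le [CharZero K] (hI : IsHomog K n I) (hJ : IsHomog K n J)
    (hIlex : IsLexIdeal K n Ilex) (hhilb : ∀ d, hilb K n Ilex d = hilb K n I d)
    (hJop : IsOplexIdeal K n Jop)
    (hg : monomialExponents Jop ⊆ leadingExponents (oplexLt n) (J.map (coordChange K n g)))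
    (d : ℕ) :
    ∃ g, hilb K n (Ilex * Jop) d ≤ hilb K n (I * J.map (coordChange K n g)) d := by
  obtain ⟨a, ha⟩ := exists_forall_ginExponents_mem_limitIdeal I d
  obtain ⟨b, hb⟩ := exists_forall_mem_monomialExponents_limitIdeal
    (fun _ _ => weight_oplexWeight_lt) hg (d := d)
  obtain ⟨g, hg⟩ := exists_hilb_limitIdeal_mul_le hI hJ a b d
  refine ⟨g, le_trans ?_ hg⟩
  set A := limitIdeal fun t => I.map (coordChange K n (a t))
  set B := limitIdeal fun t => J.map (coordChange K n (b t))
  have hsub : degreePart (ginExponents I + monomialExponents Jop) d ⊆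
      degreePart (monomialExponents (A * B)) d := fun u hu => by
    obtain ⟨hud, v, hv, w, hw, rfl⟩ := mem_degreePart.1 hu
    have hdeg : v.degree + w.degree = d := (map_add _ v w).symm.trans hud
    exact mem_degreePart.2 ⟨hud, monomialExponents_add_subset A B
      (Set.add_mem_add (ha v hv (by lia)) (hb w hw (by lia)))⟩
  calc hilb K n (Ilex * Jop) d
      = (degreePart (monomialExponents Ilex + monomialExponents Jop) d).card :=
        hIlex.1.hilb_mul hJop.1 d
    _ ≤ (degreePart (ginExponents I + monomialExponents Jop) d).card :=
        card_degreePart_add_le (isExchangeClosed_ginExponents hI)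
          (isUpperSet_monomialExponents Ilex) hIlex.isLexClosed hJop.isOplexClosed
          (card_degreePart_monomialExponents_le_ginExponents hI hIlex hhilb) d
    _ ≤ (degreePart (monomialExponents (A * B)) d).card := Finset.card_le_card hsub
    _ ≤ hilb K n (A * B) d := card_degreePart_monomialExponents_le_hilb _ d

lemma exists_monomialExponents_subset_leadingExponents_oplexLt [Infinite K]
    (hJ : IsHomog K n J)
    (hJlex : generally K n fun g =>
      IsLexIdeal K n (initialIdealO K n (lexLt n) (J.map (coordChange K n g))))
    (hJop : IsOplexIdeal K n Jop) (hhilb : ∀ d, hilb K n Jop d = hilb K n J d) :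
    ∃ g, monomialExponents Jop ⊆ leadingExponents (oplexLt n) (J.map (coordChange K n g)) := by
  obtain ⟨g, hg⟩ := hJlex.exists_GL
  refine ⟨reversalGL * g, map_coordChange_mul reversalGL g J ▸
    hJop.isOplexClosed.subset_leadingExponents_oplexLt
      ((hJ.map_coordChange g).isLexClosed_leadingExponents hg) fun d => ?_⟩
  rw [hilb_map_coordChange, ← hhilb, hJop.1.hilb_eq]

lemma generally_hilb_sup_le_and_hilb_mul_le [CharZero K] (hI : IsHomog K n I)
    (hJ : IsHomog K n J)
    (hJlex : generally K n fun g =>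
      IsLexIdeal K n (initialIdealO K n (lexLt n) (J.map (coordChange K n g))))
    (hIlex : IsLexIdeal K n Ilex) (hIhilb : ∀ d, hilb K n Ilex d = hilb K n I d)
    (hJop : IsOplexIdeal K n Jop) (hJhilb : ∀ d, hilb K n Jop d = hilb K n J d) :
    generally K n fun g => ∀ d,
      hilb K n (Ilex ⊔ Jop) d ≤ hilb K n (I ⊔ J.map (coordChange K n g)) d ∧
      hilb K n (Ilex * Jop) d ≤ hilb K n (I * J.map (coordChange K n g)) d := by
  have hI' := IsPolynomialFamily.const hI
  have hJ' := IsPolynomialFamily.map_coordChange hJ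
  obtain ⟨g₀, hg₀⟩ :=
    exists_monomialExponents_subset_leadingExponents_oplexLt hJ hJlex hJop hJhilb
  refine ((hI'.sup hJ').generally_forall_hilb_le.and (hI'.mul hJ').generally_forall_hilb_le).mono
    fun g hg d => ?_
  obtain ⟨gs, hgs⟩ := exists_hilb_sup_le hI hJ hIlex hIhilb hJop hg₀ d
  obtain ⟨gm, hgm⟩ := exists_hilb_mul_le hI hJ hIlex hIhilb hJop hg₀ d
  exact ⟨hgs.trans (hg.1 gs d), hgm.trans (hg.2 gm d)⟩

end Inequalities

/-! ### Graded tensor products -/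

section TensorGrade

variable {K}
variable {A B C D : Type*} [AddCommGroup A] [Module K A] [AddCommGroup B] [Module K B]
  [AddCommGroup C] [Module K C] [AddCommGroup D] [Module K D]

lemma mem_of_forall_tmul_tmul_mem {P : Submodule K (A ⊗[K] (B ⊗[K] C))}
    (h : ∀ a b c, a ⊗ₜ[K] (b ⊗ₜ[K] c) ∈ P) (z : A ⊗[K] (B ⊗[K] C)) : z ∈ P := by
  induction z using TensorProduct.induction_on with
  | zero => exact P.zero_mem
  | add x y hx hy => exact P.add_mem hx hy
  | tmul a y =>
    induction y using TensorProduct.induction_on with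
    | zero =>
      rw [tmul_zero]
      exact P.zero_mem
    | add x y hx hy =>
      rw [tmul_add]
      exact P.add_mem hx hy
    | tmul b c => exact h a b c

lemma mem_of_forall_tmul_tmul_tmul_mem {P : Submodule K (A ⊗[K] (B ⊗[K] (C ⊗[K] D)))}
    (h : ∀ a b c d, a ⊗ₜ[K] (b ⊗ₜ[K] (c ⊗ₜ[K] d)) ∈ P) (z : A ⊗[K] (B ⊗[K] (C ⊗[K] D))) :
    z ∈ P :=
  mem_of_forall_tmul_tmul_mem (fun a b y =>
    show y ∈ P.comap ((TensorProduct.mk K A _ a).comp (TensorProduct.mk K B (C ⊗[K] D) b)) by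
      induction y using TensorProduct.induction_on with
      | zero => exact Submodule.zero_mem _
      | add x y hx hy => exact Submodule.add_mem _ hx hy
      | tmul c d => exact h a b c d) z

end TensorGrade

section TensorGrade

variable {K}
variable {A B : Type} [AddCommGroup A] [Module K A] [AddCommGroup B] [Module K B]
  {GA : ℤ → Submodule K A} {GB : ℤ → Submodule K B}

lemma range_map_subtype_le_iff {A' : Submodule K A} {B' : Submodule K B}
    {P : Submodule K (A ⊗[K] B)} :
    LinearMap.range (TensorProduct.map A'.subtype B'.subtype) ≤ P ↔
      ∀ a ∈ A', ∀ b ∈ B', a ⊗ₜ[K] b ∈ P := by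
  rw [TensorProduct.range_map_eq_span_tmul, Submodule.span_le]
  constructor
  · exact fun h a ha b hb => h ⟨⟨a, ha⟩, ⟨b, hb⟩, rfl⟩
  · rintro h _ ⟨a, b, rfl⟩
    exact h a a.2 b b.2

lemma tensorGrade_le_iff {d : ℤ} {P : Submodule K (A ⊗[K] B)} :
    tensorGrade K GA GB d ≤ P ↔ ∀ p, ∀ a ∈ GA p, ∀ b ∈ GB (d - p), a ⊗ₜ[K] b ∈ P := by
  simp only [tensorGrade, iSup_le_iff, range_map_subtype_le_iff]

lemma tmul_mem_tensorGrade {d p q : ℤ} {a : A} {b : B} (ha : a ∈ GA p) (hb : b ∈ GB q)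
    (hd : p + q = d) : a ⊗ₜ[K] b ∈ tensorGrade K GA GB d :=
  tensorGrade_le_iff.1 le_rfl p a ha b (by rwa [← hd, add_sub_cancel_left])

lemma tensorGrade_eq_bot_of_neg (hA : ∀ p < 0, GA p = ⊥) (hB : ∀ p < 0, GB p = ⊥) {d : ℤ}
    (hd : d < 0) : tensorGrade K GA GB d = ⊥ := by
  refine eq_bot_iff.2 (tensorGrade_le_iff.2 fun p a ha b hb => ?_)
  rcases lt_or_ge p 0 with hp | hp
  · rw [(Submodule.eq_bot_iff _).1 (hA p hp) a ha, zero_tmul]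
    exact zero_mem _
  · rw [(Submodule.eq_bot_iff _).1 (hB (d - p) (by omega)) b hb, tmul_zero]
    exact zero_mem _

lemma finite_tensorGrade (hA : ∀ p < 0, GA p = ⊥) (hB : ∀ p < 0, GB p = ⊥)
    (fA : ∀ p, Module.Finite K (GA p)) (fB : ∀ p, Module.Finite K (GB p)) (d : ℤ) :
    Module.Finite K (tensorGrade K GA GB d) := by
  suffices hle : tensorGrade K GA GB d ≤ ⨆ p : Finset.Icc (0 : ℤ) d,
      LinearMap.range (TensorProduct.map (GA p).subtype (GB (d - p)).subtype) from
    have := Submodule.finiteDimensional_iSup fun p : Finset.Icc (0 : ℤ) d =>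
      LinearMap.range (TensorProduct.map (GA p).subtype (GB (d - p)).subtype)
    Submodule.finiteDimensional_of_le hle
  refine tensorGrade_le_iff.2 fun p a ha b hb => ?_
  rcases lt_or_ge p 0 with hp | hp
  · rw [(Submodule.eq_bot_iff _).1 (hA p hp) a ha, zero_tmul]
    exact zero_mem _
  rcases lt_or_ge d p with hp' | hp'
  · rw [(Submodule.eq_bot_iff _).1 (hB (d - p) (by omega)) b hb, tmul_zero]
    exact zero_mem _
  · exact Submodule.mem_iSup_of_mem ⟨p, Finset.mem_Icc.2 ⟨hp, hp'⟩⟩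
      (range_map_subtype_le_iff.1 le_rfl a ha b hb)

end TensorGrade

section GradedPieces

variable {K n}

lemma polyGrade_natCast (d : ℕ) : polyGrade K n d = homogeneousSubmodule (Fin n) K d :=
  if_pos (Int.natCast_nonneg d)

lemma polyGrade_of_neg {d : ℤ} (hd : d < 0) : polyGrade K n d = ⊥ :=
  if_neg hd.not_ge

lemma finite_polyGrade (d : ℤ) : Module.Finite K (polyGrade K n d) := by
  rcases lt_or_ge d 0 with hd | hd
  · rw [polyGrade_of_neg hd]
    infer_instance
  · lift d to ℕ using hd
    rw [polyGrade_natCast]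
    infer_instance

lemma one_mem_polyGrade : (1 : PS K n) ∈ polyGrade K n 0 := by
  rw [← Nat.cast_zero, polyGrade_natCast]
  exact isHomogeneous_one _ _

lemma mul_mem_polyGrade {p q : ℤ} {a b : PS K n} (ha : a ∈ polyGrade K n p)
    (hb : b ∈ polyGrade K n q) : a * b ∈ polyGrade K n (p + q) := by
  rcases lt_or_ge p 0 with hp | hp
  · rw [(Submodule.eq_bot_iff _).1 (polyGrade_of_neg hp) a ha, zero_mul]
    exact zero_mem _
  rcases lt_or_ge q 0 with hq | hq
  · rw [(Submodule.eq_bot_iff _).1 (polyGrade_of_neg hq) b hb, mul_zero]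
    exact zero_mem _
  lift p to ℕ using hp
  lift q to ℕ using hq
  rw [polyGrade_natCast] at ha hb
  rw [← Nat.cast_add, polyGrade_natCast]
  exact IsHomogeneous.mul ha hb

lemma quotGrade_of_neg (J : Ideal (PS K n)) {d : ℤ} (hd : d < 0) : quotGrade K n J d = ⊥ := by
  rw [quotGrade, polyGrade_of_neg hd, Submodule.map_bot]

lemma finite_quotGrade (J : Ideal (PS K n)) (d : ℤ) : Module.Finite K (quotGrade K n J d) :=
  have := finite_polyGrade (K := K) (n := n) d
  Module.Finite.map _ _

lemma mk_mem_quotGrade {J : Ideal (PS K n)} {d : ℤ} {f : PS K n} (hf : f ∈ polyGrade K n d) :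
    Ideal.Quotient.mk J f ∈ quotGrade K n J d :=
  ⟨f, hf, rfl⟩

lemma one_mem_quotGrade {J : Ideal (PS K n)} : (1 : PS K n ⧸ J) ∈ quotGrade K n J 0 :=
  mk_mem_quotGrade one_mem_polyGrade

lemma smul_mem_quotGrade {J : Ideal (PS K n)} {p q : ℤ} {s : PS K n} {m : PS K n ⧸ J}
    (hs : s ∈ polyGrade K n q) (hm : m ∈ quotGrade K n J p) :
    s • m ∈ quotGrade K n J (p + q) := by
  obtain ⟨f, hf, rfl⟩ := hm
  exact add_comm p q ▸ mk_mem_quotGrade (mul_mem_polyGrade hs hf)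

end GradedPieces

/-! ### Graded sections of quotient maps -/

section GradedSection

variable {K n} {I : Ideal (PS K n)}

lemma exists_projection_homogeneousPart (I : Ideal (PS K n)) (d : ℕ) :
    ∃ q : PS K n →ₗ[K] PS K n, (∀ f, q f ∈ I ∧ (q f).IsHomogeneous d) ∧
      ∀ f ∈ I, f.IsHomogeneous d → q f = f := by
  set Id := I.restrictScalars K ⊓ homogeneousSubmodule (Fin n) K d
  obtain ⟨r, hr⟩ := LinearMap.exists_leftInverse_of_injective Id.subtype (Submodule.ker_subtype Id)
  exact ⟨Id.subtype.comp r, fun f => (r f).2,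
    fun f hf hfd => congrArg Subtype.val (LinearMap.congr_fun hr (⟨f, hf, hfd⟩ : Id))⟩

lemma exists_graded_projection (hI : IsHomog K n I) :
    ∃ π : PS K n →ₗ[K] PS K n, (∀ f, π f ∈ I) ∧ (∀ f ∈ I, π f = f) ∧
      ∀ d f, f.IsHomogeneous d → (π f).IsHomogeneous d := by
  choose q hq hqI using exists_projection_homogeneousPart I
  set π : PS K n →ₗ[K] PS K n :=
    (basisMonomials (Fin n) K).constr K fun u => q u.degree (monomial u 1)
  have hπ_homog : ∀ d (f : PS K n), f.IsHomogeneous d → π f = q d f := by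
    intro d f hf
    rw [f.as_sum, map_sum, map_sum]
    refine Finset.sum_congr rfl fun u hu => ?_
    have hud : u.degree = d := by
      rw [← hf (mem_support_iff.1 hu), Finsupp.degree_eq_weight_one]
      rfl
    have hbasis : π (monomial u 1) = q u.degree (monomial u 1) := by
      simpa only [coe_basisMonomials] using (basisMonomials (Fin n) K).constr_basis K _ u
    rw [← mul_one (coeff u f), ← smul_eq_mul, ← smul_monomial, map_smul, map_smul, hbasis, hud]
  have hπ_eq : ∀ f, π f =
      ∑ d ∈ Finset.range (f.totalDegree + 1), q d (homogeneousComponent d f) := by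
    intro f
    conv_lhs => rw [← sum_homogeneousComponent f, map_sum]
    exact Finset.sum_congr rfl fun d _ =>
      hπ_homog d _ (homogeneousComponent_isHomogeneous d f)
  refine ⟨π, fun f => hπ_eq f ▸ Ideal.sum_mem _ fun d _ => (hq d _).1, fun f hf => ?_,
    fun d f hf => hπ_homog d f hf ▸ (hq d f).2⟩
  rw [hπ_eq]
  conv_rhs => rw [← sum_homogeneousComponent f]
  exact Finset.sum_congr rfl fun d _ =>
    hqI d _ (hI f hf d) (homogeneousComponent_isHomogeneous d f)

lemma exists_graded_section (hI : IsHomog K n I) :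
    ∃ σ : (PS K n ⧸ I) →ₗ[K] PS K n, Function.RightInverse σ (Ideal.Quotient.mk I) ∧
      ∀ d, ∀ m ∈ quotGrade K n I d, σ m ∈ polyGrade K n d := by
  obtain ⟨π, hπI, hπid, hπhom⟩ := exists_graded_projection hI
  have hker : I.restrictScalars K ≤ LinearMap.ker (LinearMap.id - π) := fun f hf => by
    rw [LinearMap.mem_ker, LinearMap.sub_apply, LinearMap.id_apply, hπid f hf, sub_self]
  set σ : (PS K n ⧸ I) →ₗ[K] PS K n := ((I.restrictScalars K).liftQ (LinearMap.id - π) hker).comp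
    (Submodule.Quotient.restrictScalarsEquiv K I).symm.toLinearMap
  have hσ : ∀ f, σ (Ideal.Quotient.mk I f) = f - π f := fun f => rfl
  refine ⟨σ, fun m => ?_, ?_⟩
  · obtain ⟨f, rfl⟩ := Ideal.Quotient.mk_surjective m
    rw [hσ, Ideal.Quotient.eq, sub_sub_cancel_left]
    exact I.neg_mem (hπI f)
  · rintro d _ ⟨f, hf, rfl⟩
    rcases lt_or_ge d 0 with hd | hd
    · rw [(Submodule.eq_bot_iff _).1 (polyGrade_of_neg hd) f hf, map_zero, map_zero]
      exact zero_mem _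
    lift d to ℕ using hd
    rw [polyGrade_natCast] at hf ⊢
    exact Submodule.sub_mem _ hf (hπhom d f hf)

end GradedSection

/-! ### `Tor_0` and `Tor_1` of two cyclic modules -/

section BarComplex

variable {K n} (I J : Ideal (PS K n))

/-- The bar differential `S/I ⊗ S ⊗ S/J → S/I ⊗ S/J`. -/
def barDiff₀ : (PS K n ⧸ I) ⊗[K] (PS K n ⊗[K] (PS K n ⧸ J)) →ₗ[K]
    (PS K n ⧸ I) ⊗[K] (PS K n ⧸ J) :=
  barB K n (PS K n ⧸ J) (PS K n ⧸ I) 0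

/-- The bar differential `S/I ⊗ S ⊗ S ⊗ S/J → S/I ⊗ S ⊗ S/J`. -/
def barDiff₁ : (PS K n ⧸ I) ⊗[K] (PS K n ⊗[K] (PS K n ⊗[K] (PS K n ⧸ J))) →ₗ[K]
    (PS K n ⧸ I) ⊗[K] (PS K n ⊗[K] (PS K n ⧸ J)) :=
  barB K n (PS K n ⧸ J) (PS K n ⧸ I) 1

/-- The internal grading of `S/I ⊗ S/J`. -/
def barGrade₀ (d : ℤ) : Submodule K ((PS K n ⧸ I) ⊗[K] (PS K n ⧸ J)) :=
  tensorGrade K (quotGrade K n I) (quotGrade K n J) d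

/-- The internal grading of `S/I ⊗ S ⊗ S/J`. -/
def barGrade₁ (d : ℤ) : Submodule K ((PS K n ⧸ I) ⊗[K] (PS K n ⊗[K] (PS K n ⧸ J))) :=
  tensorGrade K (quotGrade K n I) (tensorGrade K (polyGrade K n) (quotGrade K n J)) d

lemma torQQ_zero (d : ℤ) :
    torQQ K n I J 0 d = Module.finrank K (barGrade₀ I J d) -
      Module.finrank K ↥(LinearMap.range (barDiff₀ I J) ⊓ barGrade₀ I J d) :=
  rfl

lemma torQQ_one (d : ℤ) :
    torQQ K n I J 1 d = Module.finrank K ↥(LinearMap.ker (barDiff₀ I J) ⊓ barGrade₁ I J d) -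
      Module.finrank K ↥(LinearMap.range (barDiff₁ I J) ⊓ barGrade₁ I J d) :=
  rfl

lemma barDiff₀_tmul (m : PS K n ⧸ I) (s : PS K n) (x : PS K n ⧸ J) :
    barDiff₀ I J (m ⊗ₜ[K] (s ⊗ₜ[K] x)) = (s • m) ⊗ₜ[K] x - m ⊗ₜ[K] (s • x) :=
  rfl

lemma barDiff₁_tmul (m : PS K n ⧸ I) (s t : PS K n) (x : PS K n ⧸ J) :
    barDiff₁ I J (m ⊗ₜ[K] (s ⊗ₜ[K] (t ⊗ₜ[K] x))) =
      (s • m) ⊗ₜ[K] (t ⊗ₜ[K] x) - m ⊗ₜ[K] ((s * t) ⊗ₜ[K] x - s ⊗ₜ[K] (t • x)) :=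
  rfl

lemma barDiff₀_barDiff₁ (z : (PS K n ⧸ I) ⊗[K] (PS K n ⊗[K] (PS K n ⊗[K] (PS K n ⧸ J)))) :
    barDiff₀ I J (barDiff₁ I J z) = 0 := by
  refine mem_of_forall_tmul_tmul_tmul_mem
    (P := LinearMap.ker ((barDiff₀ I J).comp (barDiff₁ I J))) (fun m s t x => ?_) z
  rw [LinearMap.mem_ker, LinearMap.comp_apply, barDiff₁_tmul, tmul_sub, map_sub, map_sub,
    barDiff₀_tmul, barDiff₀_tmul, barDiff₀_tmul, smul_smul, smul_smul, mul_comm t s]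
  abel

end BarComplex

section BarHomology

variable {K n} {I J : Ideal (PS K n)}

lemma smul_quotient (I : Ideal (PS K n)) (f : PS K n) (m : PS K n ⧸ I) :
    f • m = Ideal.Quotient.mk I f * m := by
  obtain ⟨a, rfl⟩ := Ideal.Quotient.mk_surjective m
  rfl

lemma smul_one_quotient (I : Ideal (PS K n)) (f : PS K n) :
    f • (1 : PS K n ⧸ I) = Ideal.Quotient.mk I f := by
  rw [smul_quotient, mul_one]

section Sections

variable (σ : (PS K n ⧸ I) →ₗ[K] PS K n) (ρ : (PS K n ⧸ J) →ₗ[K] PS K n)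

/-- The map `m ⊗ x ↦ σ m * ρ x`; for sections `σ`, `ρ` of the quotient maps it lifts the
multiplication `S/I ⊗ S/J → S/(I + J)`, which computes `Tor_0`. -/
def mulSections : (PS K n ⧸ I) ⊗[K] (PS K n ⧸ J) →ₗ[K] PS K n :=
  (LinearMap.mul' K (PS K n)).comp (TensorProduct.map σ ρ)

/-- The map `m ⊗ s ⊗ x ↦ (σ m * s - σ (s • m)) * ρ x`; for sections `σ`, `ρ` of the quotient maps
it induces the isomorphism `Tor_1(S/I, S/J) ≃ (I ∩ J) / (I * J)`. -/
def connectingSections : (PS K n ⧸ I) ⊗[K] (PS K n ⊗[K] (PS K n ⧸ J)) →ₗ[K] PS K n :=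
  ((LinearMap.mul' K (PS K n)).comp (TensorProduct.map
    ((LinearMap.mul' K (PS K n)).comp (TensorProduct.map σ LinearMap.id)
      - σ.comp (smulMapM K n (PS K n ⧸ I))) ρ)).comp
    (TensorProduct.assoc K (PS K n ⧸ I) (PS K n) (PS K n ⧸ J)).symm.toLinearMap

lemma mulSections_tmul (m : PS K n ⧸ I) (x : PS K n ⧸ J) :
    mulSections σ ρ (m ⊗ₜ[K] x) = σ m * ρ x :=
  rfl

lemma connectingSections_tmul (m : PS K n ⧸ I) (s : PS K n) (x : PS K n ⧸ J) :
    connectingSections σ ρ (m ⊗ₜ[K] (s ⊗ₜ[K] x)) = (σ m * s - σ (s • m)) * ρ x :=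
  rfl

variable {σ ρ}

lemma mul_sub_section_smul_mem (hσ : Function.RightInverse σ (Ideal.Quotient.mk I)) (s : PS K n)
    (m : PS K n ⧸ I) : σ m * s - σ (s • m) ∈ I := by
  rw [← Ideal.Quotient.eq, map_mul, hσ, hσ, smul_quotient, mul_comm]

lemma section_one_sub_one_mem (hσ : Function.RightInverse σ (Ideal.Quotient.mk I)) :
    σ 1 - 1 ∈ I := by
  rw [← Ideal.Quotient.eq, hσ, map_one]

lemma mulSections_barDiff₀_mem (hσ : Function.RightInverse σ (Ideal.Quotient.mk I))
    (hρ : Function.RightInverse ρ (Ideal.Quotient.mk J))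
    (z : (PS K n ⧸ I) ⊗[K] (PS K n ⊗[K] (PS K n ⧸ J))) :
    mulSections σ ρ (barDiff₀ I J z) ∈ I ⊔ J := by
  refine mem_of_forall_tmul_tmul_mem (P := ((I ⊔ J).restrictScalars K).comap
    ((mulSections σ ρ).comp (barDiff₀ I J))) (fun m s x => ?_) z
  change mulSections σ ρ (barDiff₀ I J (m ⊗ₜ[K] (s ⊗ₜ[K] x))) ∈ I ⊔ J
  rw [barDiff₀_tmul, map_sub, mulSections_tmul, mulSections_tmul,
    show σ (s • m) * ρ x - σ m * ρ (s • x) =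
      σ m * (ρ x * s - ρ (s • x)) - (σ m * s - σ (s • m)) * ρ x by ring]
  exact Ideal.sub_mem _
    (Ideal.mem_sup_right (J.mul_mem_left _ (mul_sub_section_smul_mem hρ s x)))
    (Ideal.mem_sup_left (I.mul_mem_right _ (mul_sub_section_smul_mem hσ s m)))

lemma sub_one_tmul_mem_range_barDiff₀ (hσ : Function.RightInverse σ (Ideal.Quotient.mk I))
    (hρ : Function.RightInverse ρ (Ideal.Quotient.mk J)) (z : (PS K n ⧸ I) ⊗[K] (PS K n ⧸ J)) :
    z - 1 ⊗ₜ[K] (Ideal.Quotient.mk J (mulSections σ ρ z)) ∈ LinearMap.range (barDiff₀ I J) := by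
  induction z using TensorProduct.induction_on with
  | zero =>
    rw [map_zero, map_zero, tmul_zero, sub_zero]
    exact zero_mem _
  | add x y hx hy =>
    rw [map_add, map_add, tmul_add, add_sub_add_comm]
    exact add_mem hx hy
  | tmul m x =>
    refine ⟨1 ⊗ₜ[K] (σ m ⊗ₜ[K] x), ?_⟩
    rw [barDiff₀_tmul, smul_one_quotient, hσ, mulSections_tmul, map_mul, hρ, smul_quotient]

lemma one_tmul_mk_mem_range_barDiff₀ {f : PS K n} (hf : f ∈ I ⊔ J) :
    (1 : PS K n ⧸ I) ⊗ₜ[K] (Ideal.Quotient.mk J f) ∈ LinearMap.range (barDiff₀ I J) := by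
  obtain ⟨a, ha, b, hb, rfl⟩ := Submodule.mem_sup.1 hf
  refine ⟨-(1 ⊗ₜ[K] (a ⊗ₜ[K] 1)), ?_⟩
  rw [map_neg, barDiff₀_tmul, smul_one_quotient, smul_one_quotient,
    Ideal.Quotient.eq_zero_iff_mem.2 ha, zero_tmul, zero_sub, neg_neg, map_add,
    Ideal.Quotient.eq_zero_iff_mem.2 hb, add_zero]

lemma comap_mulSections (hσ : Function.RightInverse σ (Ideal.Quotient.mk I))
    (hρ : Function.RightInverse ρ (Ideal.Quotient.mk J)) :
    ((I ⊔ J).restrictScalars K).comap (mulSections σ ρ) = LinearMap.range (barDiff₀ I J) := by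
  apply le_antisymm
  · intro z hz
    have := add_mem (sub_one_tmul_mem_range_barDiff₀ hσ hρ z) (one_tmul_mk_mem_range_barDiff₀ hz)
    rwa [sub_add_cancel] at this
  · rintro _ ⟨z, rfl⟩
    exact mulSections_barDiff₀_mem hσ hρ z

lemma connectingSections_mem_left (hσ : Function.RightInverse σ (Ideal.Quotient.mk I))
    (z : (PS K n ⧸ I) ⊗[K] (PS K n ⊗[K] (PS K n ⧸ J))) : connectingSections σ ρ z ∈ I :=
  mem_of_forall_tmul_tmul_mem (P := (I.restrictScalars K).comap (connectingSections σ ρ))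
    (fun m s x => I.mul_mem_right (ρ x) (mul_sub_section_smul_mem hσ s m)) z

lemma connectingSections_add_mulSections_mem
    (hρ : Function.RightInverse ρ (Ideal.Quotient.mk J))
    (z : (PS K n ⧸ I) ⊗[K] (PS K n ⊗[K] (PS K n ⧸ J))) :
    connectingSections σ ρ z + mulSections σ ρ (barDiff₀ I J z) ∈ J := by
  refine mem_of_forall_tmul_tmul_mem (P := (J.restrictScalars K).comap
    (connectingSections σ ρ + (mulSections σ ρ).comp (barDiff₀ I J))) (fun m s x => ?_) z
  change connectingSections σ ρ (m ⊗ₜ[K] (s ⊗ₜ[K] x)) +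
    mulSections σ ρ (barDiff₀ I J (m ⊗ₜ[K] (s ⊗ₜ[K] x))) ∈ J
  rw [connectingSections_tmul, barDiff₀_tmul, map_sub, mulSections_tmul, mulSections_tmul,
    show (σ m * s - σ (s • m)) * ρ x + (σ (s • m) * ρ x - σ m * ρ (s • x)) =
      σ m * (ρ x * s - ρ (s • x)) by ring]
  exact J.mul_mem_left _ (mul_sub_section_smul_mem hρ s x)

lemma connectingSections_barDiff₁_mem (hσ : Function.RightInverse σ (Ideal.Quotient.mk I))
    (hρ : Function.RightInverse ρ (Ideal.Quotient.mk J))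
    (z : (PS K n ⧸ I) ⊗[K] (PS K n ⊗[K] (PS K n ⊗[K] (PS K n ⧸ J)))) :
    connectingSections σ ρ (barDiff₁ I J z) ∈ I * J := by
  refine mem_of_forall_tmul_tmul_tmul_mem (P := ((I * J).restrictScalars K).comap
    ((connectingSections σ ρ).comp (barDiff₁ I J))) (fun m s t x => ?_) z
  change connectingSections σ ρ (barDiff₁ I J (m ⊗ₜ[K] (s ⊗ₜ[K] (t ⊗ₜ[K] x)))) ∈ I * J
  rw [barDiff₁_tmul, tmul_sub, map_sub, map_sub, connectingSections_tmul, connectingSections_tmul,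
    connectingSections_tmul, smul_smul, mul_comm t s,
    show (σ (s • m) * t - σ ((s * t) • m)) * ρ x -
      ((σ m * (s * t) - σ ((s * t) • m)) * ρ x - (σ m * s - σ (s • m)) * ρ (t • x)) =
      -((σ m * s - σ (s • m)) * (ρ x * t - ρ (t • x))) by ring]
  exact neg_mem (Ideal.mul_mem_mul (mul_sub_section_smul_mem hσ s m)
    (mul_sub_section_smul_mem hρ t x))

lemma one_tmul_mul_sub_mem_range_barDiff₁ {f : PS K n} (hf : f ∈ I) (s : PS K n) :
    (1 : PS K n ⧸ I) ⊗ₜ[K] ((f * s) ⊗ₜ[K] (1 : PS K n ⧸ J)) -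
      1 ⊗ₜ[K] (f ⊗ₜ[K] (Ideal.Quotient.mk J s)) ∈ LinearMap.range (barDiff₁ I J) := by
  refine ⟨-(1 ⊗ₜ[K] (f ⊗ₜ[K] (s ⊗ₜ[K] 1))), ?_⟩
  rw [map_neg, barDiff₁_tmul, smul_one_quotient, smul_one_quotient,
    Ideal.Quotient.eq_zero_iff_mem.2 hf, zero_tmul, zero_sub, neg_neg, tmul_sub]

lemma one_tmul_tmul_one_mem_range_barDiff₁ {f : PS K n} (hf : f ∈ I * J) :
    (1 : PS K n ⧸ I) ⊗ₜ[K] (f ⊗ₜ[K] (1 : PS K n ⧸ J)) ∈ LinearMap.range (barDiff₁ I J) := by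
  induction hf using Submodule.mul_induction_on' with
  | mem_mul_mem a ha b hb =>
    have := one_tmul_mul_sub_mem_range_barDiff₁ (J := J) ha b
    rwa [Ideal.Quotient.eq_zero_iff_mem.2 hb, tmul_zero, tmul_zero, sub_zero] at this
  | add x hx y hy hx' hy' =>
    rw [add_tmul, tmul_add]
    exact add_mem hx' hy'

-- A contracting homotopy up to boundaries: modulo `im b_1`, a chain is determined by its image
-- under `connectingSections` and its boundary.
lemma sub_sub_mem_range_barDiff₁ (hσ : Function.RightInverse σ (Ideal.Quotient.mk I))
    (hρ : Function.RightInverse ρ (Ideal.Quotient.mk J))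
    (z : (PS K n ⧸ I) ⊗[K] (PS K n ⊗[K] (PS K n ⧸ J))) :
    z - 1 ⊗ₜ[K] (connectingSections σ ρ z ⊗ₜ[K] (1 : PS K n ⧸ J)) -
      1 ⊗ₜ[K] (TensorProduct.map σ LinearMap.id (barDiff₀ I J z)) ∈
        LinearMap.range (barDiff₁ I J) := by
  refine mem_of_forall_tmul_tmul_mem (P := (LinearMap.range (barDiff₁ I J)).comap
    (LinearMap.id - (TensorProduct.mk K _ _ 1).comp
        (((TensorProduct.mk K _ _).flip 1).comp (connectingSections σ ρ)) -
      (TensorProduct.mk K _ _ 1).comp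
        ((TensorProduct.map σ LinearMap.id).comp (barDiff₀ I J)))) (fun m s x => ?_) z
  simp only [Submodule.mem_comap, LinearMap.sub_apply, LinearMap.id_apply, LinearMap.comp_apply,
    mk_apply, LinearMap.flip_apply, connectingSections_tmul, barDiff₀_tmul, map_sub, map_tmul]
  have hreduce := one_tmul_mul_sub_mem_range_barDiff₁ (J := J) (mul_sub_section_smul_mem hσ s m)
    (ρ x)
  have hboundary : barDiff₁ I J (1 ⊗ₜ[K] (σ m ⊗ₜ[K] (s ⊗ₜ[K] x))) ∈
      LinearMap.range (barDiff₁ I J) := ⟨_, rfl⟩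
  rw [barDiff₁_tmul, smul_one_quotient, hσ] at hboundary
  rw [hρ] at hreduce
  convert sub_mem hboundary hreduce using 1
  simp only [sub_tmul, tmul_sub]
  abel

lemma ker_barDiff₀_inf_comap_connectingSections
    (hσ : Function.RightInverse σ (Ideal.Quotient.mk I))
    (hρ : Function.RightInverse ρ (Ideal.Quotient.mk J)) :
    ((I * J).restrictScalars K).comap (connectingSections σ ρ) ⊓ LinearMap.ker (barDiff₀ I J) =
      LinearMap.range (barDiff₁ I J) := by
  apply le_antisymm
  · rintro z ⟨hz, hz0⟩
    have hred := sub_sub_mem_range_barDiff₁ hσ hρ z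
    rw [LinearMap.mem_ker.1 hz0, map_zero, tmul_zero, sub_zero] at hred
    simpa only [sub_add_cancel] using
      add_mem hred (one_tmul_tmul_one_mem_range_barDiff₁ (I := I) (J := J) hz)
  · rintro _ ⟨z, rfl⟩
    exact ⟨connectingSections_barDiff₁_mem hσ hρ z, barDiff₀_barDiff₁ I J z⟩

end Sections

end BarHomology

section Dimensions

variable {K}
variable {V W : Type*} [AddCommGroup V] [Module K V] [AddCommGroup W] [Module K W]

lemma finrank_map_add_finrank_ker_inf (f : V →ₗ[K] W) (G : Submodule K V) [Module.Finite K G] :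
    Module.finrank K (G.map f) + Module.finrank K ↥(LinearMap.ker f ⊓ G) = Module.finrank K G := by
  have hker : LinearMap.ker (f.domRestrict G) = (LinearMap.ker f ⊓ G).comap G.subtype := by
    rw [Submodule.comap_inf, Submodule.comap_subtype_self, inf_top_eq]
    rfl
  rw [← LinearMap.finrank_range_add_finrank_ker (f.domRestrict G), LinearMap.range_domRestrict,
    hker, (Submodule.comapSubtypeEquivOfLe inf_le_right).finrank_eq]

lemma finrank_add_finrank_inf_eq (f : V →ₗ[K] W) (Q A : Submodule K W) (G : Submodule K V)
    [Module.Finite K A] [Module.Finite K G] (hGA : ∀ x ∈ G, f x ∈ A)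
    (hAG : ∀ a ∈ A, ∃ x ∈ G, f x - a ∈ Q) :
    Module.finrank K G + Module.finrank K ↥(Q ⊓ A) =
      Module.finrank K A + Module.finrank K ↥(Q.comap f ⊓ G) := by
  have himage : G.map (Q.mkQ.comp f) = A.map Q.mkQ := by
    apply le_antisymm
    · rintro _ ⟨x, hx, rfl⟩
      exact ⟨f x, hGA x hx, rfl⟩
    · rintro _ ⟨a, ha, rfl⟩
      obtain ⟨x, hx, hxa⟩ := hAG a ha
      exact ⟨x, hx, (Submodule.Quotient.eq Q).2 hxa⟩
  rw [← finrank_map_add_finrank_ker_inf (Q.mkQ.comp f) G,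
    ← finrank_map_add_finrank_ker_inf Q.mkQ A, himage, LinearMap.ker_comp, Submodule.ker_mkQ]
  exact add_right_comm _ _ _

end Dimensions

section Tor

variable {K n} {I J : Ideal (PS K n)}

lemma finite_barGrade₀ (I J : Ideal (PS K n)) (d : ℤ) : Module.Finite K (barGrade₀ I J d) :=
  finite_tensorGrade (fun _ => quotGrade_of_neg I) (fun _ => quotGrade_of_neg J)
    (finite_quotGrade I) (finite_quotGrade J) d

lemma finite_barGrade₁ (I J : Ideal (PS K n)) (d : ℤ) : Module.Finite K (barGrade₁ I J d) :=
  have hneg (p : ℤ) (hp : p < 0) : polyGrade K n p = ⊥ := polyGrade_of_neg hp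
  have hneg' (p : ℤ) (hp : p < 0) : quotGrade K n J p = ⊥ := quotGrade_of_neg J hp
  finite_tensorGrade (fun _ => quotGrade_of_neg I)
    (fun _ => tensorGrade_eq_bot_of_neg hneg hneg') (finite_quotGrade I)
    (finite_tensorGrade hneg hneg' finite_polyGrade (finite_quotGrade J)) d

lemma torQQ_zero_add_hilb_sup (hI : IsHomog K n I) (hJ : IsHomog K n J) (d : ℕ) :
    torQQ K n I J 0 d + hilb K n (I ⊔ J) d =
      Module.finrank K (homogeneousSubmodule (Fin n) K d) := by
  obtain ⟨σ, hσ, hσd⟩ := exists_graded_section hI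
  obtain ⟨ρ, hρ, hρd⟩ := exists_graded_section hJ
  have := finite_barGrade₀ I J d
  have hdegree : barGrade₀ I J d ≤
      (homogeneousSubmodule (Fin n) K d).comap (mulSections σ ρ) := by
    refine tensorGrade_le_iff.2 fun p a ha b hb => ?_
    rw [Submodule.mem_comap, ← polyGrade_natCast, ← add_sub_cancel p (d : ℤ)]
    exact mul_mem_polyGrade (hσd p a ha) (hρd _ b hb)
  have hsurj : ∀ f ∈ homogeneousSubmodule (Fin n) K d, ∃ z ∈ barGrade₀ I J d,
      mulSections σ ρ z - f ∈ (I ⊔ J).restrictScalars K := by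
    intro f hf
    rw [← polyGrade_natCast] at hf
    refine ⟨Ideal.Quotient.mk I f ⊗ₜ[K] 1,
      tmul_mem_tensorGrade (mk_mem_quotGrade hf) one_mem_quotGrade (add_zero _), ?_⟩
    have hσf : σ (Ideal.Quotient.mk I f) - f ∈ I := Ideal.Quotient.eq.1 (hσ _)
    rw [mulSections_tmul, show σ (Ideal.Quotient.mk I f) * ρ 1 - f =
      (σ (Ideal.Quotient.mk I f) - f) * ρ 1 + f * (ρ 1 - 1) by ring]
    exact Ideal.add_mem _ (Ideal.mem_sup_left (I.mul_mem_right _ hσf))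
      (Ideal.mem_sup_right (J.mul_mem_left _ (section_one_sub_one_mem hρ)))
  have hdim : Module.finrank K (barGrade₀ I J d) + hilb K n (I ⊔ J) d =
      Module.finrank K (homogeneousSubmodule (Fin n) K d) +
        Module.finrank K ↥(LinearMap.range (barDiff₀ I J) ⊓ barGrade₀ I J d) := by
    rw [← comap_mulSections hσ hρ]
    exact finrank_add_finrank_inf_eq (mulSections (I := I) (J := J) σ ρ) ((I ⊔ J).restrictScalars K)
      (homogeneousSubmodule (Fin n) K d) (barGrade₀ I J d) (fun z hz => hdegree hz) hsurj
  have hle : Module.finrank K ↥(LinearMap.range (barDiff₀ I J) ⊓ barGrade₀ I J d) ≤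
      Module.finrank K (barGrade₀ I J d) := Submodule.finrank_mono inf_le_right
  rw [torQQ_zero]
  omega

lemma barGrade₁_le_comap_connectingSections {σ : (PS K n ⧸ I) →ₗ[K] PS K n}
    {ρ : (PS K n ⧸ J) →ₗ[K] PS K n} (hσ : ∀ d, ∀ m ∈ quotGrade K n I d, σ m ∈ polyGrade K n d)
    (hρ : ∀ d, ∀ m ∈ quotGrade K n J d, ρ m ∈ polyGrade K n d) (d : ℤ) :
    barGrade₁ I J d ≤ (polyGrade K n d).comap (connectingSections σ ρ) := by
  refine tensorGrade_le_iff.2 fun p m hm y hy => ?_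
  suffices h : tensorGrade K (polyGrade K n) (quotGrade K n J) (d - p) ≤
      ((polyGrade K n d).comap (connectingSections σ ρ)).comap (TensorProduct.mk K _ _ m) from h hy
  refine tensorGrade_le_iff.2 fun q s hs x hx => ?_
  have := mul_mem_polyGrade (Submodule.sub_mem _ (mul_mem_polyGrade (hσ p m hm) hs)
    (hσ _ _ (smul_mem_quotGrade hs hm))) (hρ _ x hx)
  rwa [show p + q + (d - p - q) = d by ring] at this

lemma exists_cycle_connectingSections_sub_mem {σ : (PS K n ⧸ I) →ₗ[K] PS K n}
    {ρ : (PS K n ⧸ J) →ₗ[K] PS K n} (hσ : Function.RightInverse σ (Ideal.Quotient.mk I))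
    (hρ : Function.RightInverse ρ (Ideal.Quotient.mk J)) {d : ℤ} {f : PS K n} (hfI : f ∈ I)
    (hfJ : f ∈ J) (hfd : f ∈ polyGrade K n d) :
    ∃ z ∈ LinearMap.ker (barDiff₀ I J) ⊓ barGrade₁ I J d, connectingSections σ ρ z - f ∈ I * J := by
  have hfI' : Ideal.Quotient.mk I f = 0 := Ideal.Quotient.eq_zero_iff_mem.2 hfI
  have hfJ' : Ideal.Quotient.mk J f = 0 := Ideal.Quotient.eq_zero_iff_mem.2 hfJ
  refine ⟨1 ⊗ₜ[K] (f ⊗ₜ[K] 1), ⟨?_, tmul_mem_tensorGrade one_mem_quotGrade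
    (tmul_mem_tensorGrade hfd one_mem_quotGrade (add_zero _)) (zero_add _)⟩, ?_⟩
  · change barDiff₀ I J (1 ⊗ₜ[K] (f ⊗ₜ[K] 1)) = 0
    rw [barDiff₀_tmul, smul_one_quotient, smul_one_quotient, hfI', hfJ', zero_tmul, tmul_zero,
      sub_zero]
  · rw [connectingSections_tmul, smul_one_quotient, hfI', map_zero,
      show (σ 1 * f - 0) * ρ 1 - f = (σ 1 - 1) * f * ρ 1 + f * (ρ 1 - 1) by ring]
    exact Ideal.add_mem _
      (Ideal.mul_mem_right _ _ (Ideal.mul_mem_mul (section_one_sub_one_mem hσ) hfJ))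
      (Ideal.mul_mem_mul hfI (section_one_sub_one_mem hρ))

lemma torQQ_one_add_hilb_mul (hI : IsHomog K n I) (hJ : IsHomog K n J) (d : ℕ) :
    torQQ K n I J 1 d + hilb K n (I * J) d = hilb K n (I ⊓ J) d := by
  obtain ⟨σ, hσ, hσd⟩ := exists_graded_section hI
  obtain ⟨ρ, hρ, hρd⟩ := exists_graded_section hJ
  have := finite_barGrade₁ I J d
  have := finite_homogeneousPart (I ⊓ J) d
  have : Module.Finite K ↥(LinearMap.ker (barDiff₀ I J) ⊓ barGrade₁ I J d) :=
    Submodule.finiteDimensional_of_le (S₂ := barGrade₁ I J d) inf_le_right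
  have hmem : ∀ z ∈ LinearMap.ker (barDiff₀ I J) ⊓ barGrade₁ I J d, connectingSections σ ρ z ∈
      (I ⊓ J).restrictScalars K ⊓ homogeneousSubmodule (Fin n) K d := by
    rintro z ⟨hz, hzd⟩
    have hJz := connectingSections_add_mulSections_mem (σ := σ) hρ z
    rw [LinearMap.mem_ker.1 hz, map_zero, add_zero] at hJz
    refine ⟨⟨connectingSections_mem_left hσ z, hJz⟩, ?_⟩
    rw [← polyGrade_natCast]
    exact barGrade₁_le_comap_connectingSections hσd hρd d hzd
  have hsurj : ∀ f ∈ (I ⊓ J).restrictScalars K ⊓ homogeneousSubmodule (Fin n) K d,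
      ∃ z ∈ LinearMap.ker (barDiff₀ I J) ⊓ barGrade₁ I J d,
        connectingSections σ ρ z - f ∈ (I * J).restrictScalars K := by
    rintro f ⟨hfIJ, hfd⟩
    rw [← polyGrade_natCast] at hfd
    exact exists_cycle_connectingSections_sub_mem hσ hρ hfIJ.1 hfIJ.2 hfd
  have hdim := finrank_add_finrank_inf_eq (connectingSections (I := I) (J := J) σ ρ)
    ((I * J).restrictScalars K) ((I ⊓ J).restrictScalars K ⊓ homogeneousSubmodule (Fin n) K d)
    (LinearMap.ker (barDiff₀ I J) ⊓ barGrade₁ I J d) hmem hsurj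
  have hmul : (I * J).restrictScalars K ⊓ (I ⊓ J).restrictScalars K = (I * J).restrictScalars K :=
    inf_eq_left.2 fun f hf => Ideal.mul_le_inf (show f ∈ I * J from hf)
  rw [← inf_assoc, ← inf_assoc, hmul, ker_barDiff₀_inf_comap_connectingSections hσ hρ] at hdim
  have hle : Module.finrank K ↥(LinearMap.range (barDiff₁ I J) ⊓ barGrade₁ I J d) ≤
      Module.finrank K ↥(LinearMap.ker (barDiff₀ I J) ⊓ barGrade₁ I J d) := by
    rw [← ker_barDiff₀_inf_comap_connectingSections hσ hρ]
    exact Submodule.finrank_mono (inf_le_inf_right _ inf_le_right)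
  rw [torQQ_one]
  unfold hilb
  omega

end Tor

/-- **Remark 3.8 / Conjecture 1.5 for i = 0, 1** (Caviglia–Murai): suppose `char K = 0`.
Let `I, J ⊆ S` be homogeneous ideals such that `Gin_lex(J)` is lex.  For a general change
of coordinates `g ∈ GL_n(K)` and for `i = 0` and `i = 1`,
`dim_K Tor_i(S/I, S/g(J))_d ≤ dim_K Tor_i(S/I^lex, S/J^oplex)_d` for all `d ≥ 0`. -/
theorem tor_dim_general_le_lex_low_degrees [CharZero K]
    (I J : Ideal (PS K n)) (hI : IsHomog K n I) (hJ : IsHomog K n J)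
    (GinJ : Ideal (PS K n))
    (hGinJ : generally K n (fun g =>
      initialIdealO K n (lexLt n) (Ideal.map (coordChange K n g) J) = GinJ))
    (hGinJlex : IsLexIdeal K n GinJ)
    (Ilex : Ideal (PS K n)) (hIlex : IsLexIdeal K n Ilex)
    (hIlexHilb : ∀ d : ℕ, hilb K n Ilex d = hilb K n I d)
    (Jop : Ideal (PS K n)) (hJop : IsOplexIdeal K n Jop)
    (hJopHilb : ∀ d : ℕ, hilb K n Jop d = hilb K n J d)
 :
    generally K n (fun g => ∀ i : ℕ, i = 0 ∨ i = 1 → ∀ d : ℕ,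
      torQQ K n I (Ideal.map (coordChange K n g) J) i (d : ℤ) ≤
        torQQ K n Ilex Jop i (d : ℤ)) := by
  have hJlex := hGinJ.mono fun g hg => hg.symm ▸ hGinJlex
  refine (generally_hilb_sup_le_and_hilb_mul_le hI hJ hJlex hIlex hIlexHilb hJop hJopHilb).mono
    fun g hg i hi d => ?_
  obtain ⟨hsup, hmul⟩ := hg d
  have hgJ := hJ.map_coordChange g
  have hL := hIlex.1.isHomog
  have hO := hJop.1.isHomog
  rcases hi with rfl | rfl
  · have htor := torQQ_zero_add_hilb_sup hI hgJ d
    have htor' := torQQ_zero_add_hilb_sup hL hO d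
    lia
  · have htor := torQQ_one_add_hilb_mul hI hgJ d
    have htor' := torQQ_one_add_hilb_mul hL hO d
    have hinf := hilb_sup_add_hilb_inf hI hgJ d
    have hinf' := hilb_sup_add_hilb_inf hL hO d
    have hdimJ := hilb_map_coordChange g J d
    have hdimI := hIlexHilb d
    have hdimO := hJopHilb d
    lia

end
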